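/- arXiv:1301.0448 — 9 statements merged into one kernel-verified Lean document; each statement's English description precedes it below -/
import Mathlib

section
/- Let m be a finite positive measure on [0,∞) all of whose moments are finite, and which is the unique measure on [0,∞) with moments ∫ x^k dm(x) = C_{k+1} for all k ≥ 0. For each N, let a = a_N be a real random variable such that N·E[a^{2k}] → C_k as N → ∞ for every k ≥ 1. Define φ_N(λ) = E[exp(−iλ a²)] for λ in the closed lower half-plane {Im λ ≤ 0}. Then N(φ_N(λ) − 1) converges, uniformly on compact subsets of {Im λ ≤ 0}, to Φ(λ) := ∫_{[0,∞)} (e^{−iλx} − 1)/x dm(x), where the integrand is defined to be −iλ at x = 0. -/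
/-!
Push the measure `N x² dν_N(x)` forward along `x ↦ x²` to get a finite measure `μ_N` on `[0, ∞)`.
Its `k`-th moment is `N E[a^{2(k+1)}]`, which tends to `C (k+1)`, the `k`-th moment of `m`; and
`N(φ_N(λ) − 1) = ∫ g_λ dμ_N` for the kernel `g_λ(x) = (e^{−iλx} − 1)/x`, `g_λ(0) = −iλ`.

* `tendsto_of_tendsto_moments` (method of moments): bounded moments make `(μ_N)` tight, so by
  Prokhorov's theorem every ultrafilter on `ℕ` finer than `atTop` gives a weak limit. Truncating
  `x ^ k` at height `R` costs at most `∫ x ^ (2k) / R`, so the limit has the moments of `m`; it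
  is supported on `[0, ∞)`, hence equals `m` by determinacy. Thus `μ_N → m` weakly.
* `tendstoUniformlyOn_integral_expKernel`: on `[0, ∞)` the kernel `g_λ` is continuous and bounded,
  so the integrals converge for each `λ`. It is also `1`-Lipschitz in `λ` on the closed lower
  half-plane, because `exp` is `1`-Lipschitz on `{Re ≤ 0}`. The integrals are therefore
  equi-Lipschitz in `λ`, and pointwise convergence is uniform on compact sets.
-/

open MeasureTheory Filter Complex
noncomputable section
open scoped Topology NNReal BoundedContinuousFunction

/-! ### The method of moments -/

/-- `x ↦ x ^ k` truncated to take values in `[-R, R]`. -/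
def clampPow (k : ℕ) (R : ℝ) (hR : 0 ≤ R) : ℝ →ᵇ ℝ :=
  BoundedContinuousFunction.ofNormedAddCommGroup (fun x : ℝ => max (-R) (min (x ^ k) R))
    (by fun_prop) R (fun x => by
      rw [Real.norm_eq_abs, abs_le]
      exact ⟨le_max_left _ _, max_le (by linarith) (min_le_right _ _)⟩)

lemma clampPow_apply (k : ℕ) (R : ℝ) (hR : 0 ≤ R) (x : ℝ) :
    clampPow k R hR x = max (-R) (min (x ^ k) R) := rfl

/-- The error vanishes unless `|x ^ k| > R`, where it is at most `|x ^ k| ≤ |x ^ k|² / R`. -/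
lemma abs_pow_sub_clampPow_le (k : ℕ) (R : ℝ) (hR : 0 < R) (x : ℝ) :
    |x ^ k - clampPow k R hR.le x| ≤ x ^ (2 * k) / R := by
  rw [clampPow_apply, le_div_iff₀ hR, mul_comm 2 k, pow_mul]
  generalize x ^ k = y
  rcases le_total y R with h1 | h1
  · rcases le_total (-R) y with h2 | h2
    · rw [min_eq_left h1, max_eq_right h2]; simp; positivity
    · rw [min_eq_left h1, max_eq_left h2, abs_of_nonpos (by linarith)]
      nlinarith
  · rw [min_eq_right h1, max_eq_right (by linarith), abs_of_nonneg (by linarith)]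
    nlinarith

lemma abs_integral_pow_sub_clampPow_le (μ : Measure ℝ) [IsFiniteMeasure μ]
    (hint : ∀ k : ℕ, Integrable (fun x => x ^ k) μ) (k : ℕ) (R : ℝ) (hR : 0 < R) :
    |∫ x, x ^ k ∂μ - ∫ x, clampPow k R hR.le x ∂μ| ≤ (∫ x, x ^ (2 * k) ∂μ) / R := by
  rw [← integral_sub (hint k) ((clampPow k R hR.le).integrable μ), ← integral_div]
  refine (abs_integral_le_integral_abs).trans (integral_mono ?_ ((hint _).div_const _) ?_)
  · exact ((hint k).sub ((clampPow k R hR.le).integrable μ)).abs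
  · exact fun x => abs_pow_sub_clampPow_le k R hR x

/-- By Fatou's lemma along the truncations of the nonnegative function `x ^ (2 * k)`, whose integrals
against the weak limit are at most `c (2 * k)`. -/
lemma integrable_even_pow_of_tendsto {U : Filter ℕ} [U.NeBot] {μ : ℕ → FiniteMeasure ℝ}
    {μ' : FiniteMeasure ℝ} {c : ℕ → ℝ} (hU : Tendsto μ U (𝓝 μ'))
    (hint : ∀ n (k : ℕ), Integrable (fun x => x ^ k) (μ n : Measure ℝ))
    (hc : ∀ k : ℕ, Tendsto (fun n => ∫ x, x ^ k ∂(μ n : Measure ℝ)) U (𝓝 (c k))) (k : ℕ) :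
    Integrable (fun x => x ^ (2 * k)) (μ' : Measure ℝ) := by
  have hev (x : ℝ) : 0 ≤ x ^ (2 * k) := (even_two_mul k).pow_nonneg x
  have hle (R : ℝ) (hR : 0 ≤ R) (x : ℝ) : clampPow (2 * k) R hR x ≤ x ^ (2 * k) :=
    max_le (by linarith [hev x]) (min_le_left _ _)
  have hnn (R : ℝ) (hR : 0 ≤ R) (x : ℝ) : 0 ≤ clampPow (2 * k) R hR x :=
    le_max_of_le_right (le_min (hev x) hR)
  have hbd (R : ℝ) (hR : 0 ≤ R) :
      ∫ x, clampPow (2 * k) R hR x ∂(μ' : Measure ℝ) ≤ c (2 * k) := by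
    refine le_of_tendsto_of_tendsto
      ((FiniteMeasure.tendsto_iff_forall_integral_tendsto.1 hU) (clampPow (2 * k) R hR))
      (hc (2 * k)) (Eventually.of_forall fun n => ?_)
    exact integral_mono ((clampPow (2 * k) R hR).integrable _) (hint n _) (hle R hR)
  refine integrable_of_tendsto (G := fun (n : ℕ) x => clampPow (2 * k) n n.cast_nonneg x)
    (Eventually.of_forall fun x => ?_)
    (fun n => (clampPow (2 * k) n n.cast_nonneg).continuous.aestronglyMeasurable) ?_
  · refine tendsto_const_nhds.congr' ?_
    filter_upwards [tendsto_natCast_atTop_atTop.eventually_ge_atTop (x ^ (2 * k))] with n hn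
    rw [clampPow_apply, min_eq_left hn, max_eq_right (by linarith [hev x])]
  · refine ne_top_of_le_ne_top (b := ENNReal.ofReal (c (2 * k))) ENNReal.ofReal_ne_top ?_
    refine liminf_le_of_le (by isBoundedDefault) fun b hb => ?_
    obtain ⟨n, hn⟩ := hb.exists
    refine hn.trans ?_
    refine le_trans (le_of_eq ?_) (ENNReal.ofReal_le_ofReal (hbd n n.cast_nonneg))
    rw [ofReal_integral_eq_lintegral_ofReal ((clampPow (2 * k) n n.cast_nonneg).integrable _)
      (Eventually.of_forall (hnn n n.cast_nonneg))]
    refine lintegral_congr fun x => ?_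
    rw [Real.enorm_eq_ofReal (hnn n n.cast_nonneg x)]

lemma integrable_pow_of_tendsto {U : Filter ℕ} [U.NeBot] {μ : ℕ → FiniteMeasure ℝ}
    {μ' : FiniteMeasure ℝ} {c : ℕ → ℝ} (hU : Tendsto μ U (𝓝 μ'))
    (hint : ∀ n (k : ℕ), Integrable (fun x => x ^ k) (μ n : Measure ℝ))
    (hc : ∀ k : ℕ, Tendsto (fun n => ∫ x, x ^ k ∂(μ n : Measure ℝ)) U (𝓝 (c k))) (k : ℕ) :
    Integrable (fun x => x ^ k) (μ' : Measure ℝ) := by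
  refine ((integrable_const (1 : ℝ)).add (integrable_even_pow_of_tendsto hU hint hc k)).mono'
    (by fun_prop) (Eventually.of_forall fun x => ?_)
  simp only [Pi.add_apply]
  rw [mul_comm 2 k, pow_mul, Real.norm_eq_abs, abs_le]
  constructor <;> nlinarith [sq_nonneg (x ^ k - 1), sq_nonneg (x ^ k + 1)]

/-- The truncated moments converge by weak convergence, and the truncation errors are `O(1 / R)`
uniformly in `n`. -/
lemma integral_pow_eq_of_tendsto {U : Filter ℕ} [U.NeBot] {μ : ℕ → FiniteMeasure ℝ}
    {μ' : FiniteMeasure ℝ} {c : ℕ → ℝ} (hU : Tendsto μ U (𝓝 μ'))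
    (hint : ∀ n (k : ℕ), Integrable (fun x => x ^ k) (μ n : Measure ℝ))
    (hc : ∀ k : ℕ, Tendsto (fun n => ∫ x, x ^ k ∂(μ n : Measure ℝ)) U (𝓝 (c k))) (k : ℕ) :
    ∫ x, x ^ k ∂(μ' : Measure ℝ) = c k := by
  have hint' := integrable_pow_of_tendsto hU hint hc
  have key (R : ℝ) (hR : 0 < R) : |∫ x, x ^ k ∂(μ' : Measure ℝ) - c k| ≤
      (∫ x, x ^ (2 * k) ∂(μ' : Measure ℝ) + c (2 * k)) / R := by
    have h1 := abs_integral_pow_sub_clampPow_le (μ' : Measure ℝ) hint' k R hR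
    have h2 : |c k - ∫ x, clampPow k R hR.le x ∂(μ' : Measure ℝ)| ≤ c (2 * k) / R := by
      refine le_of_tendsto_of_tendsto (((hc k).sub
        ((FiniteMeasure.tendsto_iff_forall_integral_tendsto.1 hU) (clampPow k R hR.le))).abs)
        ((hc (2 * k)).div_const R) (Eventually.of_forall fun n => ?_)
      exact abs_integral_pow_sub_clampPow_le (μ n : Measure ℝ) (hint n) k R hR
    rw [add_div]
    rw [abs_le] at *
    constructor <;> linarith
  have hlim : Tendsto (fun R : ℝ => (∫ x, x ^ (2 * k) ∂(μ' : Measure ℝ) + c (2 * k)) / R)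
      atTop (𝓝 0) := tendsto_const_nhds.div_atTop tendsto_id
  have := ge_of_tendsto hlim ((eventually_gt_atTop 0).mono key)
  exact sub_eq_zero.1 (abs_eq_zero.1 (le_antisymm this (abs_nonneg _)))

/-- A weak limit of measures carried by `[0, ∞)` is carried by `[0, ∞)`: test against the bounded
continuous function `min (max (-x) 0) 1`, which is positive exactly on `(-∞, 0)`. -/
lemma measure_neg_eq_zero_of_tendsto {U : Filter ℕ} [U.NeBot] {μ : ℕ → FiniteMeasure ℝ}
    {μ' : FiniteMeasure ℝ} (hU : Tendsto μ U (𝓝 μ'))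
    (hsupp : ∀ n, (μ n : Measure ℝ) {x : ℝ | x < 0} = 0) :
    (μ' : Measure ℝ) {x : ℝ | x < 0} = 0 := by
  let f : ℝ →ᵇ ℝ := BoundedContinuousFunction.ofNormedAddCommGroup
    (fun x : ℝ => min (max (-x) 0) 1) (by fun_prop) 1 (fun x => by
      rw [Real.norm_eq_abs, abs_of_nonneg (by positivity)]; exact min_le_right _ _)
  have hf (x : ℝ) : f x = min (max (-x) 0) 1 := rfl
  have h0 (n : ℕ) : ∫ x, f x ∂(μ n : Measure ℝ) = 0 := by
    refine integral_eq_zero_of_ae ?_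
    filter_upwards [measure_eq_zero_iff_ae_notMem.1 (hsupp n)] with x hx
    simp only [not_lt] at hx
    simp [hf, hx]
  have h1 : ∫ x, f x ∂(μ' : Measure ℝ) = 0 := by
    have := (FiniteMeasure.tendsto_iff_forall_integral_tendsto.1 hU) f
    simp only [h0] at this
    exact tendsto_nhds_unique this tendsto_const_nhds
  rw [integral_eq_zero_iff_of_nonneg (fun x => by rw [hf]; positivity) (f.integrable _)] at h1
  rw [measure_eq_zero_iff_ae_notMem]
  filter_upwards [h1] with x hx
  simp only [not_lt]
  by_contra! h
  rw [hf] at hx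
  have : 0 < min (max (-x) 0) 1 := lt_min (lt_max_of_lt_left (by linarith)) one_pos
  simp at hx
  grind

/-- Method of moments (Stieltjes case): on `[0, ∞)`, convergence of all moments to those of a
measure determined by its moments implies weak convergence. -/
theorem tendsto_of_tendsto_moments {μ : ℕ → FiniteMeasure ℝ} {μ' : FiniteMeasure ℝ} {c : ℕ → ℝ}
    (hsupp : ∀ n, (μ n : Measure ℝ) {x : ℝ | x < 0} = 0)
    (hint : ∀ n (k : ℕ), Integrable (fun x => x ^ k) (μ n : Measure ℝ))
    (hc : ∀ k : ℕ, Tendsto (fun n => ∫ x, x ^ k ∂(μ n : Measure ℝ)) atTop (𝓝 (c k)))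
    (huniq : ∀ m' : Measure ℝ, IsFiniteMeasure m' → m' {x : ℝ | x < 0} = 0 →
      (∀ k : ℕ, Integrable (fun x => x ^ k) m') → (∀ k : ℕ, ∫ x, x ^ k ∂m' = c k) → m' = μ') :
    Tendsto μ atTop (𝓝 μ') := by
  obtain ⟨A, hA⟩ := (hc 0).bddAbove_range
  obtain ⟨B, hB⟩ := (hc 2).bddAbove_range
  replace hA (n : ℕ) := hA (Set.mem_range_self n)
  replace hB (n : ℕ) := hB (Set.mem_range_self n)
  simp only [pow_zero, integral_const, smul_eq_mul, mul_one] at hA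
  have hB0 : 0 ≤ B := (integral_nonneg fun x => sq_nonneg x).trans (hB 0)
  -- Tightness: the second moments are at most `B`, so Markov's inequality bounds the mass outside
  -- `[-(n+1), n+1]` by `B / (n+1)`.
  have hcomp := isCompact_setOfPred_finiteMeasure_mass_le_compl_isCompact_le
    (u := fun n : ℕ => (B / (n + 1)).toNNReal) (K := fun n : ℕ => Set.Icc (-(n + 1 : ℝ)) (n + 1))
    A.toNNReal
    (by
      rw [← Real.toNNReal_zero]
      refine (continuous_real_toNNReal.tendsto 0).comp ?_
      exact tendsto_const_nhds.div_atTop (tendsto_natCast_atTop_atTop.atTop_add tendsto_const_nhds))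
    (fun n => isCompact_Icc) (Or.inl inferInstance)
  have hmem (N : ℕ) : μ N ∈ {μ : FiniteMeasure ℝ | μ.mass ≤ A.toNNReal ∧
      ∀ n : ℕ, μ (Set.Icc (-(n + 1 : ℝ)) (n + 1))ᶜ ≤ (B / (n + 1)).toNNReal} := by
    refine ⟨NNReal.le_toNNReal_of_coe_le (hA N), fun n => NNReal.le_toNNReal_of_coe_le ?_⟩
    have hpos : (0 : ℝ) < n + 1 := by positivity
    have h1 := mul_meas_ge_le_integral_of_nonneg (μ := (μ N : Measure ℝ)) (f := fun x => x ^ 2)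
      (Eventually.of_forall fun x => sq_nonneg x) (hint N 2) (n + 1)
    rw [le_div_iff₀ hpos, mul_comm]
    refine le_trans ?_ (h1.trans (hB N))
    refine mul_le_mul_of_nonneg_left ?_ hpos.le
    refine measureReal_mono (fun x hx => ?_)
    simp only [Set.mem_compl_iff, Set.mem_Icc, not_and_or, not_le] at hx
    simp only [Set.mem_ofPred_eq]
    have : (0 : ℝ) ≤ n := n.cast_nonneg
    rcases hx with hx | hx <;> nlinarith
  rw [tendsto_iff_ultrafilter]
  intro U hU
  obtain ⟨ρ, -, hρ⟩ := isCompact_iff_ultrafilter_le_nhds.1 hcomp (U.map μ)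
    (by
      rw [Ultrafilter.coe_map, le_principal_iff, mem_map]
      exact univ_mem' hmem)
  have hρ : Tendsto μ U (𝓝 ρ) := hρ
  have hcU (k : ℕ) := (hc k).mono_left hU
  have : ρ = μ' := Subtype.ext (huniq ρ inferInstance (measure_neg_eq_zero_of_tendsto hρ hsupp)
    (integrable_pow_of_tendsto hρ hint hcU) (integral_pow_eq_of_tendsto hρ hint hcU))
  exact this ▸ hρ

/-! ### The kernel `(e^{-iλx} - 1) / x` -/

/-- The function `x ↦ (e^{-iλx} - 1) / x`, continuously extended by `-iλ` at `x = 0`. -/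
def expKernel (lam : ℂ) (x : ℝ) : ℂ :=
  if x = (0 : ℝ) then -(Complex.I * lam)
    else (Complex.exp (-(Complex.I * lam * (x : ℂ))) - 1) / (x : ℂ)

lemma expKernel_zero_left (x : ℝ) : expKernel 0 x = 0 := by simp [expKernel]

lemma mul_expKernel (lam : ℂ) (x : ℝ) :
    (x : ℂ) * expKernel lam x = Complex.exp (-(Complex.I * lam * (x : ℂ))) - 1 := by
  by_cases h : x = 0
  · simp [h]
  · have : (x : ℂ) ≠ 0 := by exact_mod_cast h
    rw [expKernel, if_neg h]; field_simp

/-- The kernel is the slope at `0` of `x ↦ e^{-iλx}`, extended by the derivative there. -/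
lemma continuous_expKernel (lam : ℂ) : Continuous (expKernel lam) := by
  have hd : Differentiable ℝ (fun x : ℝ => Complex.exp (-(Complex.I * lam * (x : ℂ)))) := by
    fun_prop
  have hD : HasDerivAt (fun x : ℝ => Complex.exp (-(Complex.I * lam * (x : ℂ))))
      (-(Complex.I * lam)) 0 := by
    have := (((Complex.ofRealCLM.hasDerivAt (x := (0 : ℝ))).const_mul (Complex.I * lam)).neg).cexp
    simpa using this
  have heq : expKernel lam = dslope (fun x : ℝ => Complex.exp (-(Complex.I * lam * (x : ℂ)))) 0 := by
    funext x
    by_cases h : x = 0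
    · subst h
      rw [dslope_same, hD.deriv, expKernel, if_pos rfl]
    · rw [dslope_of_ne _ h, slope_def_module, expKernel, if_neg h, Complex.real_smul]
      simp
      ring
  rw [heq, ← continuousOn_univ, continuousOn_dslope Filter.univ_mem]
  exact ⟨hd.continuous.continuousOn, hd 0⟩

lemma norm_exp_sub_exp_le {z w : ℂ} (hz : z.re ≤ 0) (hw : w.re ≤ 0) :
    ‖Complex.exp z - Complex.exp w‖ ≤ ‖z - w‖ := by
  have := (convex_halfSpace_re_le 0).norm_image_sub_le_of_norm_deriv_le (𝕜 := ℂ)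
    (f := Complex.exp) (C := 1) (fun x _ => Complex.differentiable_exp x)
    (fun x hx => by
      rw [Complex.deriv_exp, Complex.norm_exp]
      exact Real.exp_le_one_iff.2 hx) hw hz
  simpa using this

lemma norm_expKernel_sub_le {lam lam' : ℂ} (h : lam.im ≤ 0) (h' : lam'.im ≤ 0) {x : ℝ}
    (hx : 0 ≤ x) :
    ‖expKernel lam x - expKernel lam' x‖ ≤ ‖lam - lam'‖ := by
  rcases hx.eq_or_lt with rfl | hx
  · rw [expKernel, expKernel, if_pos rfl, if_pos rfl, ← norm_neg, neg_sub, sub_neg_eq_add,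
      neg_add_eq_sub, ← mul_sub, norm_mul, Complex.norm_I, one_mul]
  · have hre (l : ℂ) (hl : l.im ≤ 0) : (-(Complex.I * l * (x : ℂ))).re ≤ 0 := by
      simp; nlinarith
    have key := norm_exp_sub_exp_le (hre lam h) (hre lam' h')
    have e1 : Complex.exp (-(Complex.I * lam * (x : ℂ))) -
        Complex.exp (-(Complex.I * lam' * (x : ℂ)))
        = x * (expKernel lam x - expKernel lam' x) := by
      rw [mul_sub, mul_expKernel, mul_expKernel]; ring
    have e2 : -(Complex.I * lam * (x : ℂ)) - -(Complex.I * lam' * (x : ℂ))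
        = x * (-Complex.I * (lam - lam')) := by ring
    rw [e1, e2, norm_mul, norm_mul, norm_mul, norm_neg, Complex.norm_I, one_mul] at key
    exact le_of_mul_le_mul_left key (by simpa using hx.ne')

/-- The kernel as a bounded continuous function on `ℝ`. It is unbounded on `(-∞, 0)` in general, so
there it is replaced by its value at `0`; this is invisible to measures carried by `[0, ∞)`. -/
def expKernelBCF (lam : ℂ) (h : lam.im ≤ 0) : ℝ →ᵇ ℂ :=
  BoundedContinuousFunction.ofNormedAddCommGroup (fun x : ℝ => expKernel lam (max x 0))
    ((continuous_expKernel lam).comp (by fun_prop)) ‖lam‖ (fun x => by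
      simpa [expKernel_zero_left] using
        norm_expKernel_sub_le h (lam' := 0) (by simp) (le_max_right x 0))

lemma integral_expKernel_eq {μ : Measure ℝ} (hμ : μ {x : ℝ | x < 0} = 0) {lam : ℂ}
    (h : lam.im ≤ 0) :
    ∫ x, expKernel lam x ∂μ = ∫ x, expKernelBCF lam h x ∂μ := by
  refine integral_congr_ae ?_
  filter_upwards [measure_eq_zero_iff_ae_notMem.1 hμ] with x hx
  simp only [not_lt] at hx
  change expKernel lam x = expKernel lam (max x 0)
  rw [max_eq_left hx]

/-- Weak convergence gives pointwise convergence in `λ`; since the integrals are equi-Lipschitz in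
`λ`, the convergence is uniform on compact sets. -/
theorem tendstoUniformlyOn_integral_expKernel {μ : ℕ → FiniteMeasure ℝ} {μ' : FiniteMeasure ℝ}
    (h : Tendsto μ atTop (𝓝 μ')) (hsupp : ∀ n, (μ n : Measure ℝ) {x : ℝ | x < 0} = 0)
    (hsupp' : (μ' : Measure ℝ) {x : ℝ | x < 0} = 0)
    {K : Set ℂ} (hK : IsCompact K) (hKs : K ⊆ {lam : ℂ | lam.im ≤ 0}) :
    TendstoUniformlyOn (fun n lam => ∫ x, expKernel lam x ∂(μ n : Measure ℝ))
      (fun lam => ∫ x, expKernel lam x ∂(μ' : Measure ℝ)) atTop K := by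
  -- Testing against the constant function `1` bounds the total masses by some `A`.
  obtain ⟨A, hA⟩ := (FiniteMeasure.tendsto_iff_forall_integral_tendsto.1 h
    (BoundedContinuousFunction.const ℝ 1)).bddAbove_range
  replace hA (n : ℕ) := hA (Set.mem_range_self n)
  simp only [BoundedContinuousFunction.const_apply, integral_const, smul_eq_mul, mul_one] at hA
  have hlip (n : ℕ) : LipschitzOnWith A.toNNReal
      (fun lam => ∫ x, expKernel lam x ∂(μ n : Measure ℝ)) K := by
    refine LipschitzOnWith.of_dist_le_mul fun l hl l' hl' => ?_
    rw [dist_eq_norm, dist_eq_norm, integral_expKernel_eq (hsupp n) (hKs hl),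
      integral_expKernel_eq (hsupp n) (hKs hl'), ← integral_sub ((expKernelBCF l _).integrable _)
        ((expKernelBCF l' _).integrable _)]
    refine (norm_integral_le_of_norm_le_const (C := ‖l - l'‖) (Eventually.of_forall fun x =>
      norm_expKernel_sub_le (hKs hl) (hKs hl') (le_max_right x 0))).trans ?_
    rw [mul_comm]
    exact mul_le_mul_of_nonneg_right ((hA n).trans (Real.le_coe_toNNReal A)) (norm_nonneg _)
  have heq := (LipschitzOnWith.uniformEquicontinuousOn _ _ hlip).equicontinuousOn
  have := (EquicontinuousOn.tendsto_uniformOnFun_iff_pi' (𝔖 := {K}) (by simpa using hK)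
    (by simpa using heq) atTop (fun lam => ∫ x, expKernel lam x ∂(μ' : Measure ℝ))).2 ?_
  · rw [UniformOnFun.tendsto_iff_tendstoUniformlyOn] at this
    exact this K rfl
  · rw [tendsto_pi_nhds]
    rintro ⟨l, hl⟩
    have hl : l ∈ K := by simpa using hl
    have := (FiniteMeasure.tendsto_iff_forall_integral_rclike_tendsto ℂ).1 h
      (expKernelBCF l (hKs hl))
    rw [← integral_expKernel_eq hsupp' (hKs hl)] at this
    refine this.congr fun n => ?_
    rw [← integral_expKernel_eq (hsupp n) (hKs hl)]
    rfl

/-! ### The squared, size-biased measures -/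

/-- The image under `x ↦ x²` of the measure `N x² dν(x)`. -/
def sqMeasure (N : ℕ) (ν : Measure ℝ) : Measure ℝ :=
  (N : ℝ≥0) • (ν.withDensity fun x => ((x ^ 2).toNNReal : ENNReal)).map (fun x => x ^ 2)

lemma sqMeasure_neg (N : ℕ) (ν : Measure ℝ) : sqMeasure N ν {x : ℝ | x < 0} = 0 := by
  have : (fun x : ℝ => x ^ 2) ⁻¹' {x : ℝ | x < 0} = ∅ := by
    ext x; simpa using sq_nonneg x
  have hms : MeasurableSet {x : ℝ | x < 0} := measurableSet_Iio
  rw [sqMeasure, Measure.smul_apply, Measure.map_apply (by fun_prop) hms, this]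
  simp

lemma integral_sqMeasure {E : Type*} [NormedAddCommGroup E] [NormedSpace ℝ E] (N : ℕ)
    (ν : Measure ℝ) {f : ℝ → E} (hf : StronglyMeasurable f) :
    ∫ x, f x ∂(sqMeasure N ν) = (N : ℝ) • ∫ x, x ^ 2 • f (x ^ 2) ∂ν := by
  rw [sqMeasure, integral_smul_nnreal_measure, integral_map (by fun_prop) hf.aestronglyMeasurable,
    integral_withDensity_eq_integral_smul (by fun_prop)]
  simp only [NNReal.smul_def, Real.coe_toNNReal _ (sq_nonneg _), NNReal.coe_natCast]

lemma integrable_pow_sqMeasure (N : ℕ) (ν : Measure ℝ)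
    (hν : ∀ k : ℕ, Integrable (fun x => x ^ k) ν) (k : ℕ) :
    Integrable (fun x => x ^ k) (sqMeasure N ν) := by
  refine Integrable.smul_measure_nnreal ?_
  rw [integrable_map_measure (by fun_prop) (by fun_prop),
    integrable_withDensity_iff_integrable_smul (by fun_prop)]
  refine (hν (2 + 2 * k)).congr (Eventually.of_forall fun x => ?_)
  simp only [NNReal.smul_def, Real.coe_toNNReal _ (sq_nonneg _), Function.comp, smul_eq_mul]
  ring

lemma integral_pow_sqMeasure (N : ℕ) (ν : Measure ℝ) (k : ℕ) :
    ∫ x, x ^ k ∂(sqMeasure N ν) = N * ∫ x, x ^ (2 * (k + 1)) ∂ν := by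
  rw [integral_sqMeasure N ν (by fun_prop), smul_eq_mul]
  congr 2
  funext x
  rw [smul_eq_mul]
  ring

lemma isFiniteMeasure_sqMeasure (N : ℕ) (ν : Measure ℝ)
    (hν : ∀ k : ℕ, Integrable (fun x => x ^ k) ν) : IsFiniteMeasure (sqMeasure N ν) := by
  have := integrable_pow_sqMeasure N ν hν 0
  simpa [integrable_const_iff] using this

lemma integral_expKernel_sqMeasure (N : ℕ) (ν : Measure ℝ) [IsProbabilityMeasure ν] {lam : ℂ}
    (h : lam.im ≤ 0) : ∫ x, expKernel lam x ∂(sqMeasure N ν) =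
      (N : ℂ) * ((∫ x, Complex.exp (-(Complex.I * lam * (x : ℂ) ^ 2)) ∂ν) - 1) := by
  have hint : Integrable (fun x : ℝ => Complex.exp (-(Complex.I * lam * (x : ℂ) ^ 2))) ν := by
    refine Integrable.of_bound (by fun_prop) 1 (Eventually.of_forall fun x => ?_)
    rw [Complex.norm_exp, Real.exp_le_one_iff, ← Complex.ofReal_pow]
    simp only [Complex.neg_re, Complex.re_mul_ofReal, Complex.I_mul_re]
    nlinarith [sq_nonneg x]
  rw [integral_sqMeasure N ν (continuous_expKernel lam).stronglyMeasurable, Complex.real_smul,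
    Complex.ofReal_natCast]
  congr 1
  have : (1 : ℂ) = ∫ _, (1 : ℂ) ∂ν := by simp
  rw [this, ← integral_sub hint (integrable_const _)]
  congr 1
  funext x
  rw [Complex.real_smul, mul_expKernel, Complex.ofReal_pow]

/-- Let `m` be a finite positive measure on `[0,∞)` with all moments finite, the unique such
measure with moments `∫ x^k dm = C_{k+1}`.  If, for each `N`, `ν N` is the law of a real
random variable `a` with `N·E[a^{2k}] → C_k` for every `k ≥ 1`, and
`φ_N(λ) = E[exp(−iλa²)]`, then `N(φ_N(λ) − 1)` converges uniformly on compact subsets of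
the closed lower half-plane to `Φ(λ) = ∫ (e^{−iλx} − 1)/x dm(x)` (with integrand `−iλ`
at `x = 0`). -/
theorem exploding_moments_char_exponent_limit (C : ℕ → ℝ)
    (m : Measure ℝ) [IsFiniteMeasure m] (hm_supp : m {x : ℝ | x < 0} = 0)
    (hm_mom : ∀ k : ℕ, Integrable (fun x => x ^ k) m)
    (hm_eq : ∀ k : ℕ, ∫ x, x ^ k ∂m = C (k + 1))
    (hm_uniq : ∀ m' : Measure ℝ, IsFiniteMeasure m' → m' {x : ℝ | x < 0} = 0 →
      (∀ k : ℕ, Integrable (fun x => x ^ k) m') →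
      (∀ k : ℕ, ∫ x, x ^ k ∂m' = C (k + 1)) → m' = m)
    (ν : ℕ → Measure ℝ) (hprob : ∀ N, IsProbabilityMeasure (ν N))
    (hmom : ∀ (N : ℕ) (k : ℕ), Integrable (fun x => x ^ k) (ν N))
    (hC : ∀ k : ℕ, 1 ≤ k →
      Tendsto (fun N : ℕ => (N : ℝ) * ∫ x, x ^ (2 * k) ∂(ν N)) atTop (nhds (C k))) :
    ∀ K : Set ℂ, IsCompact K → K ⊆ {lam : ℂ | lam.im ≤ 0} →
      TendstoUniformlyOn
        (fun (N : ℕ) (lam : ℂ) =>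
          (N : ℂ) * ((∫ x, Complex.exp (-(Complex.I * lam * (x : ℂ) ^ 2)) ∂(ν N)) - 1))
        (fun lam : ℂ => ∫ x, (if x = (0 : ℝ) then -(Complex.I * lam)
          else (Complex.exp (-(Complex.I * lam * (x : ℂ))) - 1) / (x : ℂ)) ∂m)
        atTop K := by
  intro K hK hKs
  let μ : ℕ → FiniteMeasure ℝ := fun N =>
    ⟨sqMeasure N (ν N), isFiniteMeasure_sqMeasure N _ (hmom N)⟩
  have hμ (N : ℕ) : (μ N : Measure ℝ) {x : ℝ | x < 0} = 0 := sqMeasure_neg N (ν N)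
  have hlim : Tendsto μ atTop (𝓝 ⟨m, inferInstance⟩) := by
    refine tendsto_of_tendsto_moments (c := fun k => C (k + 1)) hμ
      (fun N => integrable_pow_sqMeasure N (ν N) (hmom N)) (fun k => ?_) hm_uniq
    refine (hC (k + 1) (by omega)).congr fun N => ?_
    exact (integral_pow_sqMeasure N (ν N) k).symm
  refine (tendstoUniformlyOn_integral_expKernel hlim hμ hm_supp hK hKs).congr
    (Eventually.of_forall fun N lam hlam => ?_)
  have := hprob N
  exact integral_expKernel_sqMeasure N (ν N) (hKs hlam)
end
end

section
/- Let h : [0,∞) → ℝ be the entire function h(t) = Σ_{k≥0} (−t)^k / (k!(k+1)!), so that h(t) = J_1(2√t)/√t where J_1(s) = (s/2) Σ_{k≥0} (−s²/4)^k/(k!(k+1)!) is the Bessel function of the first kind. Then for every ξ ∈ ℂ with Re ξ > 0, one has 1 − e^{−ξ} = ∫_0^∞ h(t) e^{−t/ξ} dt. -/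
/-!
The Laplace transform of the series for `h` may be taken term by term. For `Re z > 0` one has
`∫₀^∞ t^k e^{-zt} dt = k! / z^(k+1)` (`integral_pow_mul_exp_neg_mul`, by integration by parts), so
with `z = 1/ξ` the `k`-th term contributes `(-1)^k ξ^(k+1) / (k+1)!`, and these sum to `1 - e^{-ξ}`.
The interchange is legitimate for every `ξ` in the half-plane, because the same formula at the real
point `Re z` shows that the `L¹` norms of the terms are `(Re z)^(-(k+1)) / (k+1)!`, which are
summable. No analytic continuation or growth bound on `h` is needed.
-/

open MeasureTheory Complex
noncomputable section

/-- The entire function `h(t) = ∑_{k≥0} (−t)^k / (k!(k+1)!)`, which equals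
`J₁(2√t)/√t` where `J₁` is the Bessel function of the first kind. -/
def besselh (t : ℝ) : ℝ :=
  ∑' k : ℕ, (-t) ^ k / (Nat.factorial k * Nat.factorial (k + 1))

theorem integrableOn_pow_mul_exp_neg_mul_real (k : ℕ) {a : ℝ} (ha : 0 < a) :
    IntegrableOn (fun t : ℝ => t ^ k * Real.exp (-(a * t))) (Set.Ioi 0) := by
  have h := integrableOn_rpow_mul_exp_neg_mul_rpow (p := 1) (s := k) (b := a)
    (by have := Nat.cast_nonneg (α := ℝ) k; linarith) one_pos ha
  simpa using h

theorem norm_exp_neg_mul (z : ℂ) (t : ℝ) :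
    ‖cexp (-(z * t))‖ = Real.exp (-(z.re * t)) := by
  simp [Complex.norm_exp]

theorem integrableOn_pow_mul_exp_neg_mul (k : ℕ) {z : ℂ} (hz : 0 < z.re) :
    IntegrableOn (fun t : ℝ => (t : ℂ) ^ k * cexp (-(z * t))) (Set.Ioi 0) := by
  refine (integrableOn_pow_mul_exp_neg_mul_real k hz).mono'
    (Continuous.aestronglyMeasurable (by fun_prop)) ?_
  filter_upwards [ae_restrict_mem measurableSet_Ioi] with t ht
  rw [norm_mul, norm_exp_neg_mul, norm_pow, Complex.norm_real, Real.norm_of_nonneg (le_of_lt ht)]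

theorem tendsto_pow_mul_exp_neg_mul (k : ℕ) {z : ℂ} (hz : 0 < z.re) :
    Filter.Tendsto (fun t : ℝ => (t : ℂ) ^ k * cexp (-(z * t))) Filter.atTop (nhds 0) := by
  rw [tendsto_zero_iff_norm_tendsto_zero]
  have h := tendsto_rpow_mul_exp_neg_mul_atTop_nhds_zero (k : ℝ) z.re hz
  refine h.congr' ?_
  filter_upwards [Filter.eventually_ge_atTop 0] with t ht
  rw [norm_mul, norm_exp_neg_mul, norm_pow, Complex.norm_real, Real.norm_of_nonneg ht]
  simp

/-- The Laplace transform of `t ^ k` on the open right half-plane. -/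
theorem integral_pow_mul_exp_neg_mul (k : ℕ) {z : ℂ} (hz : 0 < z.re) :
    ∫ t in Set.Ioi (0 : ℝ), (t : ℂ) ^ k * cexp (-(z * t)) = k.factorial / z ^ (k + 1) := by
  have hz0 : z ≠ 0 := by rintro rfl; simp at hz
  have hexp (t : ℝ) : HasDerivAt (fun t : ℝ => cexp (-(z * t))) (cexp (-(z * t)) * -z) t := by
    have h : HasDerivAt (fun w : ℂ => -(z * w)) (-z) t := by
      simpa using! ((hasDerivAt_id (t : ℂ)).const_mul z).neg
    exact h.cexp.comp_ofReal
  induction k with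
  | zero =>
    have hi := (integrableOn_pow_mul_exp_neg_mul 0 hz).mul_const (-z)
    have h := integral_Ioi_of_hasDerivAt_of_tendsto' (a := 0) (fun t _ => hexp t)
      (by simpa [IntegrableOn] using hi) (by simpa using tendsto_pow_mul_exp_neg_mul 0 hz)
    rw [integral_mul_const] at h
    simp only [pow_zero, one_mul, Nat.factorial_zero, Nat.cast_one, zero_add, pow_one]
    rw [eq_div_iff hz0]
    simp at h
    exact h
  | succ k ih =>
    have hi0 := (integrableOn_pow_mul_exp_neg_mul k hz).const_mul ((k : ℂ) + 1)
    have hi1 := (integrableOn_pow_mul_exp_neg_mul (k + 1) hz).const_mul z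
    have hd (t : ℝ) : HasDerivAt (fun t : ℝ => (t : ℂ) ^ (k + 1) * cexp (-(z * t)))
        (((k : ℂ) + 1) * ((t : ℂ) ^ k * cexp (-(z * t)))
          - z * ((t : ℂ) ^ (k + 1) * cexp (-(z * t)))) t := by
      have h1 : HasDerivAt (fun t : ℝ => (t : ℂ) ^ (k + 1)) (((k : ℂ) + 1) * (t : ℂ) ^ k) t := by
        simpa using (hasDerivAt_pow (k + 1) (t : ℂ)).comp_ofReal
      exact (h1.mul (hexp t)).congr_deriv (by ring)
    have h := integral_Ioi_of_hasDerivAt_of_tendsto' (a := 0) (fun t _ => hd t)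
      (hi0.sub hi1) (tendsto_pow_mul_exp_neg_mul (k + 1) hz)
    rw [integral_sub hi0 hi1, integral_const_mul, integral_const_mul, ih] at h
    simp only [ofReal_zero, ne_eq, Nat.add_eq_zero_iff, one_ne_zero, and_false,
      not_false_eq_true, zero_pow, zero_mul, sub_zero] at h
    have h' := (sub_eq_zero.mp h).symm
    rw [eq_div_of_mul_eq hz0 ((mul_comm _ _).trans h'), Nat.factorial_succ]
    push_cast
    field_simp
    ring

theorem integral_norm_pow_mul_exp_neg_mul (k : ℕ) {z : ℂ} (hz : 0 < z.re) :
    ∫ t in Set.Ioi (0 : ℝ), ‖(t : ℂ) ^ k * cexp (-(z * t))‖ = k.factorial / z.re ^ (k + 1) := by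
  have h := integral_pow_mul_exp_neg_mul k (z := (z.re : ℂ)) (by simpa using hz)
  rw [← Complex.ofReal_inj, ← integral_complex_ofReal]
  push_cast
  rw [← h]
  refine setIntegral_congr_fun measurableSet_Ioi fun t ht => ?_
  simp only [norm_mul, norm_exp_neg_mul, norm_pow, Complex.norm_real,
    Real.norm_of_nonneg (le_of_lt (show (0 : ℝ) < t from ht))]
  push_cast
  rfl

theorem hasSum_one_sub_exp_neg (ξ : ℂ) :
    HasSum (fun k : ℕ => (-1) ^ k * ξ ^ (k + 1) / ((k + 1).factorial : ℂ)) (1 - cexp (-ξ)) := by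
  have h := NormedSpace.expSeries_div_hasSum_exp (-ξ)
  rw [← Complex.exp_eq_exp_ℂ, ← hasSum_nat_add_iff' 1] at h
  have h' := h.neg
  simp only [Finset.range_one, Finset.sum_singleton, pow_zero, Nat.factorial_zero, Nat.cast_one,
    div_one, neg_sub] at h'
  refine h'.congr_fun fun k => ?_
  rw [neg_pow ξ]
  ring

/-- For every `ξ ∈ ℂ` with `Re ξ > 0`,
`1 − e^{−ξ} = ∫_0^∞ h(t) e^{−t/ξ} dt`. -/
theorem one_sub_exp_neg_eq_integral_besselh (ξ : ℂ) (hξ : 0 < ξ.re) :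
    1 - Complex.exp (-ξ)
      = ∫ t in Set.Ioi (0 : ℝ), (besselh t : ℂ) * Complex.exp (-(t / ξ)) := by
  have hξ0 : ξ ≠ 0 := by rintro rfl; simp at hξ
  have hz : 0 < (ξ⁻¹).re := by
    rw [Complex.inv_re]
    exact div_pos hξ (Complex.normSq_pos.mpr hξ0)
  set z := ξ⁻¹ with hzdef
  let c : ℕ → ℂ := fun k => (-1) ^ k / (k.factorial * (k + 1).factorial)
  have hfac (k : ℕ) : (k.factorial : ℝ) ≠ 0 := by exact_mod_cast k.factorial_ne_zero
  have hfacC (k : ℕ) : (k.factorial : ℂ) ≠ 0 := by exact_mod_cast k.factorial_ne_zero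
  have hc (k : ℕ) : ‖c k‖ = 1 / (k.factorial * (k + 1).factorial) := by
    simp [c]
  -- Termwise integration; summability of the `L¹` norms is the exponential series at `1 / Re z`.
  have key := hasSum_integral_of_summable_integral_norm (μ := volume.restrict (Set.Ioi (0 : ℝ)))
    (F := fun k (t : ℝ) => c k * ((t : ℂ) ^ k * cexp (-(z * t))))
    (fun k => (integrableOn_pow_mul_exp_neg_mul k hz).const_mul (c k)) (by
      have hs := (summable_nat_add_iff 1).mpr (Real.summable_pow_div_factorial (z.re⁻¹))
      refine hs.congr fun k => ?_
      simp_rw [norm_mul (c k)]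
      rw [integral_const_mul, integral_norm_pow_mul_exp_neg_mul k hz, hc]
      have := hfac k
      have := hfac (k + 1)
      rw [inv_pow]
      field_simp)
  have hsum : HasSum (fun k => ∫ t in Set.Ioi (0 : ℝ), c k * ((t : ℂ) ^ k * cexp (-(z * t))))
      (1 - cexp (-ξ)) := by
    refine (hasSum_one_sub_exp_neg ξ).congr_fun fun k => ?_
    rw [integral_const_mul, integral_pow_mul_exp_neg_mul k hz, hzdef, inv_pow, div_inv_eq_mul]
    have := hfacC k
    have := hfacC (k + 1)
    simp only [c]
    field_simp
  rw [hsum.unique key]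
  refine integral_congr_ae (Filter.Eventually.of_forall fun t => ?_)
  simp only [besselh, ofReal_tsum]
  rw [← tsum_mul_right]
  refine tsum_congr fun k => ?_
  rw [hzdef, neg_pow t, div_eq_inv_mul (t : ℂ)]
  simp only [c]
  push_cast
  ring
end
end

section
/- Let h(t) = Σ_{k≥0} (−t)^k / (k!(k+1)!) (so h(t) = J_1(2√t)/√t with J_1 the Bessel function of the first kind), and let m be a finite positive measure on [0,∞) all of whose moments are finite. Define g(y) = −∫_{[0,∞)} h(xy) dm(x) for y > 0. Then for every λ ∈ ℂ with Im λ < 0, ∫_{[0,∞)} (e^{−iλx} − 1)/x dm(x) = ∫_0^∞ g(y) e^{iy/λ} dy, where the integrand of the left-hand side is defined to be −iλ at x = 0. -/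
/-!
The function `h = besselh` has a Laplace transform that can be computed term by term: for
`Re r > 0` and `x ≥ 0`,
`∫₀^∞ h(xy) e^{−ry} dy = ∑ (−x)^k / ((k+1)! r^{k+1}) = (1 − e^{−x/r}) / x`
(`hasSum_laplace_besselh`), which at `r = −i/λ` is minus the integrand on the left-hand side
(`laplace_besselh`). Integrating in `m` and exchanging the integrals gives the theorem.

Fubini needs `h` to be bounded on `[0, ∞)`. This follows from `t h'' + 2 h' + h = 0`: the energy
`h² + t h'²` is nonincreasing, so `|h| ≤ h(0) = 1` (`abs_besselh_le_one`). The integrand is then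
dominated by `|e^{iy/λ}|`, which is integrable on the product since `m` is finite.
-/

open MeasureTheory Complex Set
noncomputable section

/-- `g(y) = −∫ h(xy) dm(x)` for a measure `m` on `[0,∞)`. -/
def gOfMeasure (m : Measure ℝ) (y : ℝ) : ℝ := -∫ x, besselh (x * y) ∂m

/-! ### The Bessel–Clifford series and the bound on `besselh` -/

/-- The Bessel–Clifford type series `∑ (−t)^k / (k!(k+n)!)`, so that `besselh = clifford 1`. -/
def clifford (n : ℕ) (t : ℝ) : ℝ :=
  ∑' k : ℕ, (-t) ^ k / (Nat.factorial k * Nat.factorial (k + n))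

lemma clifford_term_bound (n k : ℕ) (t R : ℝ) (ht : |t| ≤ R) :
    ‖(-t) ^ k / ((Nat.factorial k : ℝ) * Nat.factorial (k + n))‖ ≤ R ^ k / Nat.factorial k := by
  have hR : 0 ≤ R := (abs_nonneg t).trans ht
  rw [norm_div, norm_pow, norm_neg, Real.norm_eq_abs, Real.norm_of_nonneg (by positivity)]
  have h1 : (1 : ℝ) ≤ Nat.factorial (k + n) := by
    exact_mod_cast Nat.succ_le_of_lt (Nat.factorial_pos _)
  have h2 : (0 : ℝ) < Nat.factorial k := by positivity
  gcongr
  exact le_mul_of_one_le_right h2.le h1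

lemma clifford_summable (n : ℕ) (t : ℝ) :
    Summable fun k : ℕ => (-t) ^ k / ((Nat.factorial k : ℝ) * Nat.factorial (k + n)) :=
  Summable.of_norm_bounded (Real.summable_pow_div_factorial |t|)
    fun k => clifford_term_bound n k t _ le_rfl

lemma clifford_hasDerivAt (n : ℕ) (t : ℝ) : HasDerivAt (clifford n) (-clifford (n + 1) t) t := by
  let g : ℕ → ℝ → ℝ := fun k t => (-t) ^ k / ((Nat.factorial k : ℝ) * Nat.factorial (k + n))
  let g' : ℕ → ℝ → ℝ := fun k t =>
    k * (-t) ^ (k - 1) * (-1) / ((Nat.factorial k : ℝ) * Nat.factorial (k + n))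
  have hg'succ : ∀ k y, g' (k + 1) y =
      -((-y) ^ k / ((Nat.factorial k : ℝ) * Nat.factorial (k + (n + 1)))) := by
    intro k y
    have : k + 1 + n = k + (n + 1) := by ring
    simp only [g', this, Nat.factorial_succ k, Nat.add_sub_cancel]
    push_cast
    field_simp
  -- On the ball of radius `R` the differentiated series is dominated by `∑ R ^ (k-1) / (k-1)!`.
  let R : ℝ := |t| + 1
  let u : ℕ → ℝ := fun k => if k = 0 then 0 else R ^ (k - 1) / Nat.factorial (k - 1)
  have hu : Summable u := by
    rw [← summable_nat_add_iff 1]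
    simpa [u] using Real.summable_pow_div_factorial R
  have h0 : ∀ y, g' 0 y = 0 := fun y => by simp [g']
  have key : HasDerivAt (fun z => ∑' k, g k z) (∑' k, g' k t) t := by
    refine hasDerivAt_tsum_of_isPreconnected (t := Metric.ball 0 R) (y₀ := 0) hu
      Metric.isOpen_ball (convex_ball _ _).isPreconnected ?_ ?_ ?_ (clifford_summable n 0) ?_
    · intro k y _
      exact ((hasDerivAt_neg y).fun_pow k).div_const _
    · intro k y hy
      rcases k with _ | k
      · simp [h0, u]
      · rw [hg'succ, norm_neg]
        simpa [u] using clifford_term_bound (n + 1) k y R (by simpa using (mem_ball_zero_iff.1 hy).le)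
    · simp [R]; positivity
    · simp [R]
  have hs : ∑' k, g' k t = -clifford (n + 1) t := by
    have hsum : HasSum (fun k => g' (k + 1) t) (-clifford (n + 1) t) := by
      simp_rw [hg'succ]
      exact (clifford_summable (n + 1) t).hasSum.neg
    have hsum := (hasSum_nat_add_iff (f := fun k => g' k t) 1).1 hsum
    rw [hsum.tsum_eq, Finset.sum_range_one, h0, add_zero]
  rw [← hs]
  exact key

/-- The three-term recurrence; for `n = 1` it is the differential equation
`t h'' + 2 h' + h = 0`. -/
lemma clifford_recurrence (n : ℕ) (t : ℝ) :
    t * clifford (n + 2) t = (n + 1) * clifford (n + 1) t - clifford n t := by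
  have h2 := (clifford_summable (n + 2) t).hasSum.mul_left (-t)
  let a : ℕ → ℝ := fun k => k * ((-t) ^ k / ((Nat.factorial k : ℝ) * Nat.factorial (k + (n + 1))))
  have ha : HasSum a (-t * clifford (n + 2) t) := by
    have : HasSum (fun k => a (k + 1)) (-t * clifford (n + 2) t) := by
      refine h2.congr_fun fun k => ?_
      have : k + 1 + (n + 1) = k + (n + 2) := by ring
      simp only [a, this, Nat.factorial_succ k]
      push_cast
      field_simp
      ring
    rw [hasSum_nat_add_iff] at this
    simpa [a] using this
  have h1 := (clifford_summable (n + 1) t).hasSum.mul_left ((n : ℝ) + 1)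
  have h0 := (clifford_summable n t).hasSum
  have hadd := ha.add h1
  have : HasSum (fun k : ℕ => (-t) ^ k / ((Nat.factorial k : ℝ) * Nat.factorial (k + n)))
      (-t * clifford (n + 2) t + (n + 1) * clifford (n + 1) t) := by
    refine hadd.congr_fun fun k => ?_
    have : k + (n + 1) = (k + n) + 1 := by ring
    simp only [a, this, Nat.factorial_succ (k + n)]
    push_cast
    field_simp
    ring
  have := this.unique h0
  change _ = clifford n t at this
  linarith

lemma clifford_zero_right (n : ℕ) : clifford n 0 = 1 / Nat.factorial n := by
  unfold clifford
  rw [tsum_eq_single 0 (by intro k hk; simp [hk])]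
  simp

/-- Along the differential equation the energy `h² + t h'²` has derivative `−3 h'²`, hence
`h² ≤ h(0)² = 1` on `[0, ∞)`. -/
lemma abs_besselh_le_one {t : ℝ} (ht : 0 ≤ t) : |besselh t| ≤ 1 := by
  let E : ℝ → ℝ := fun t => clifford 1 t ^ 2 + t * clifford 2 t ^ 2
  have hE : ∀ s, HasDerivAt E (-3 * clifford 2 s ^ 2) s := by
    intro s
    have := ((clifford_hasDerivAt 1 s).fun_pow 2).fun_add
      ((hasDerivAt_id' s).fun_mul ((clifford_hasDerivAt 2 s).fun_pow 2))
    refine this.congr_deriv ?_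
    have hr := clifford_recurrence 1 s
    norm_num at hr ⊢
    linear_combination (-2 * clifford 2 s) * hr
  have hanti : Antitone E := antitone_of_deriv_nonpos (fun s => (hE s).differentiableAt)
    fun s => by rw [(hE s).deriv]; nlinarith [sq_nonneg (clifford 2 s)]
  have h1 : E t ≤ E 0 := hanti ht
  simp only [E, clifford_zero_right] at h1
  norm_num at h1
  change |clifford 1 t| ≤ 1
  rw [← sq_le_one_iff_abs_le_one]
  nlinarith [mul_nonneg ht (sq_nonneg (clifford 2 t))]

lemma continuous_besselh : Continuous besselh :=
  continuous_iff_continuousAt.2 fun t => (clifford_hasDerivAt 1 t).continuousAt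

/-! ### Laplace transforms -/

lemma integrableOn_pow_mul_exp (k : ℕ) {s : ℝ} (hs : 0 < s) :
    IntegrableOn (fun y : ℝ => y ^ k * Real.exp (-(s * y))) (Ioi 0) := by
  simpa using integrableOn_rpow_mul_exp_neg_mul_rpow (p := 1) (s := k) (b := s)
    (by have : (0 : ℝ) ≤ k := by positivity
        linarith) one_pos hs

lemma integral_pow_mul_exp (k : ℕ) {s : ℝ} (hs : 0 < s) :
    ∫ y in Ioi (0 : ℝ), y ^ k * Real.exp (-(s * y)) = Nat.factorial k / s ^ (k + 1) := by
  have := Real.integral_rpow_mul_exp_neg_mul_Ioi (a := k + 1) (r := s) (by positivity) hs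
  rw [Real.Gamma_nat_eq_factorial] at this
  simp only [add_sub_cancel_right, Real.rpow_natCast] at this
  rw [this]
  norm_cast
  simp [div_eq_mul_inv, mul_comm]

lemma norm_pow_mul_cexp (k : ℕ) (r : ℂ) {y : ℝ} (hy : 0 < y) :
    ‖(y : ℂ) ^ k * cexp (-(r * y))‖ = y ^ k * Real.exp (-(r.re * y)) := by
  rw [norm_mul, norm_pow, Complex.norm_real, Complex.norm_exp, Real.norm_of_nonneg hy.le]
  simp

lemma integrableOn_pow_mul_cexp (k : ℕ) {r : ℂ} (hr : 0 < r.re) :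
    IntegrableOn (fun y : ℝ => (y : ℂ) ^ k * cexp (-(r * y))) (Ioi 0) := by
  refine Integrable.mono' (integrableOn_pow_mul_exp k hr) (by fun_prop) ?_
  filter_upwards [ae_restrict_mem measurableSet_Ioi] with y hy
  rw [norm_pow_mul_cexp k r hy]

/-- The Laplace transform of `y^k` at a complex point of the right half-plane. -/
lemma integral_pow_mul_cexp (k : ℕ) {r : ℂ} (hr : 0 < r.re) :
    ∫ y in Ioi (0 : ℝ), (y : ℂ) ^ k * cexp (-(r * y)) = Nat.factorial k / r ^ (k + 1) := by
  have hr0 : r ≠ 0 := by rintro rfl; simp at hr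
  induction k with
  | zero =>
    have := integral_exp_mul_complex_Ioi (a := -r) (by simpa using hr) 0
    simp [neg_mul] at this ⊢
    rw [this]
  | succ k ih =>
    have hint := (integrableOn_pow_mul_cexp k hr).const_mul ((k : ℂ) + 1)
    have hint' := (integrableOn_pow_mul_cexp (k + 1) hr).const_mul r
    have hd : ∀ y ∈ Ici (0 : ℝ), HasDerivAt (fun y : ℝ => (y : ℂ) ^ (k + 1) * cexp (-(r * y)))
        (((k : ℂ) + 1) * ((y : ℂ) ^ k * cexp (-(r * y)))
          - r * ((y : ℂ) ^ (k + 1) * cexp (-(r * y)))) y := by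
      intro y _
      have h1 : HasDerivAt (fun y : ℝ => (y : ℂ)) 1 y := Complex.ofRealCLM.hasDerivAt
      refine ((h1.fun_pow (k + 1)).fun_mul ((h1.const_mul r).fun_neg.cexp)).congr_deriv ?_
      push_cast [Nat.add_sub_cancel]
      ring
    have hlim : Filter.Tendsto (fun y : ℝ => (y : ℂ) ^ (k + 1) * cexp (-(r * y)))
        Filter.atTop (nhds 0) := by
      rw [tendsto_zero_iff_norm_tendsto_zero]
      have := tendsto_rpow_mul_exp_neg_mul_atTop_nhds_zero (k + 1 : ℕ) r.re hr
      refine this.congr' ?_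
      filter_upwards [Filter.eventually_gt_atTop 0] with y hy
      rw [norm_pow_mul_cexp _ _ hy, Real.rpow_natCast, neg_mul]
    -- The integral of the derivative of `y ^ (k+1) * e^{-ry}` vanishes.
    have hI := integral_Ioi_of_hasDerivAt_of_tendsto' hd (hint.sub hint') hlim
    rw [integral_sub hint hint', integral_const_mul, integral_const_mul, ih] at hI
    simp only [ofReal_zero, ne_eq, Nat.add_eq_zero_iff, one_ne_zero, and_false,
      not_false_eq_true, zero_pow, zero_mul, sub_zero] at hI
    rw [sub_eq_zero] at hI
    rw [Nat.factorial_succ, pow_succ r (k + 1)]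
    apply mul_left_cancel₀ hr0
    rw [← hI]
    push_cast
    field_simp

/-- The Laplace transform of `y ↦ h(xy)`, computed termwise. -/
lemma hasSum_laplace_besselh {x : ℝ} (hx : 0 ≤ x) {r : ℂ} (hr : 0 < r.re) :
    HasSum (fun k : ℕ => (-(x : ℂ)) ^ k / (Nat.factorial (k + 1) * r ^ (k + 1)))
      (∫ y in Ioi (0 : ℝ), (besselh (x * y) : ℂ) * cexp (-(r * y))) := by
  let c : ℕ → ℂ := fun k => (-(x : ℂ)) ^ k / ((Nat.factorial k : ℂ) * Nat.factorial (k + 1))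
  let F : ℕ → ℝ → ℂ := fun k y => c k * ((y : ℂ) ^ k * cexp (-(r * y)))
  have hFint : ∀ k, Integrable (F k) (volume.restrict (Ioi 0)) := fun k =>
    (integrableOn_pow_mul_cexp k hr).const_mul _
  have hnorm : ∀ k, ∫ y in Ioi (0 : ℝ), ‖F k y‖ =
      r.re⁻¹ * ((x / r.re) ^ k / Nat.factorial (k + 1)) := by
    intro k
    have : ∫ y in Ioi (0 : ℝ), ‖F k y‖ =
        ∫ y in Ioi (0 : ℝ), ‖c k‖ * (y ^ k * Real.exp (-(r.re * y))) := by
      refine setIntegral_congr_fun measurableSet_Ioi fun y hy => ?_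
      simp only [F]
      rw [norm_mul, norm_pow_mul_cexp k r hy]
    rw [this, integral_const_mul, integral_pow_mul_exp k hr]
    simp only [c, norm_div, norm_pow, norm_neg, norm_mul, Complex.norm_real, Complex.norm_natCast,
      Real.norm_of_nonneg hx, div_pow]
    field_simp
    ring
  have hsum : Summable fun k => ∫ y in Ioi (0 : ℝ), ‖F k y‖ := by
    simp_rw [hnorm]
    refine Summable.mul_left _ (Summable.of_nonneg_of_le (fun k => by positivity) (fun k => ?_)
      (Real.summable_pow_div_factorial (x / r.re)))
    gcongr
    omega
  have := hasSum_integral_of_summable_integral_norm hFint hsum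
  have heq : ∫ y in Ioi (0 : ℝ), ∑' k, F k y =
      ∫ y in Ioi (0 : ℝ), (besselh (x * y) : ℂ) * cexp (-(r * y)) := by
    refine setIntegral_congr_fun measurableSet_Ioi fun y hy => ?_
    simp only [F, besselh]
    rw [Complex.ofReal_tsum, ← tsum_mul_right]
    congr 1
    funext k
    simp only [c]
    push_cast
    rw [← neg_mul (x : ℂ), mul_pow]
    ring
  rw [heq] at this
  refine this.congr_fun fun k => ?_
  simp only [F]
  rw [integral_const_mul, integral_pow_mul_cexp k hr]
  have : (Nat.factorial k : ℂ) ≠ 0 := by exact_mod_cast Nat.factorial_ne_zero k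
  simp only [c]
  field_simp

/-- The Laplace transform of `y ↦ −h(xy)` at `r = −i/λ`, which has positive real part and
inverse `iλ`, is `(e^{−iλx} − 1)/x`; at `x = 0` only the term `k = 0` of the series survives. -/
lemma laplace_besselh {x : ℝ} (hx : 0 ≤ x) {lam : ℂ} (hlam : lam.im < 0) :
    (if x = (0 : ℝ) then -(I * lam) else (cexp (-(I * lam * (x : ℂ))) - 1) / (x : ℂ)) =
      ∫ y in Ioi (0 : ℝ), -(besselh (x * y) : ℂ) * cexp (I * (y : ℂ) / lam) := by
  have hl0 : lam ≠ 0 := by rintro rfl; simp at hlam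
  have hr : 0 < (-I / lam).re := by
    have : (-I / lam).re = -lam.im / normSq lam := by simp [Complex.div_re]
    rw [this]
    exact div_pos (by linarith) (normSq_pos.2 hl0)
  have hs := hasSum_laplace_besselh hx hr
  have hrw : ∫ y in Ioi (0 : ℝ), -(besselh (x * y) : ℂ) * cexp (I * (y : ℂ) / lam) =
      -∫ y in Ioi (0 : ℝ), (besselh (x * y) : ℂ) * cexp (-(-I / lam * y)) := by
    rw [← integral_neg]
    refine integral_congr_ae (Filter.Eventually.of_forall fun y => ?_)
    have : I * (y : ℂ) / lam = -(-I / lam * y) := by ring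
    simp only [this, neg_mul]
  rw [hrw]
  have hinv : (-I / lam)⁻¹ = I * lam := by
    rw [inv_div, div_eq_iff (by simp)]
    linear_combination lam * I_mul_I
  have hterm : ∀ k : ℕ, (-(x : ℂ)) ^ k / (Nat.factorial (k + 1) * (-I / lam) ^ (k + 1)) =
      (-(x : ℂ)) ^ k * (I * lam) ^ (k + 1) / Nat.factorial (k + 1) := by
    intro k
    rw [← hinv, inv_pow]
    field_simp
  simp_rw [hterm] at hs
  split_ifs with h
  · subst h
    have h1 := hasSum_single (f := fun k : ℕ =>
      (-((0 : ℝ) : ℂ)) ^ k * (I * lam) ^ (k + 1) / Nat.factorial (k + 1)) 0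
      (by intro k hk; simp [hk])
    rw [← h1.unique hs]
    simp
  · have hx0 : (x : ℂ) ≠ 0 := by exact_mod_cast h
    have h1 := NormedSpace.expSeries_div_hasSum_exp (-(I * lam * (x : ℂ)))
    rw [← Complex.exp_eq_exp_ℂ, ← hasSum_nat_add_iff' 1] at h1
    have h2 := hs.mul_left (-(x : ℂ))
    have h3 : (fun k : ℕ => -(x : ℂ) * ((-(x : ℂ)) ^ k * (I * lam) ^ (k + 1)
        / Nat.factorial (k + 1))) =
        fun k : ℕ => (-(I * lam * (x : ℂ))) ^ (k + 1) / Nat.factorial (k + 1) := by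
      funext k
      have : -(I * lam * (x : ℂ)) = -(x : ℂ) * (I * lam) := by ring
      rw [this, mul_pow]
      ring
    rw [h3] at h2
    have := h1.unique h2
    simp only [Finset.range_one, Finset.sum_singleton, pow_zero, Nat.factorial_zero,
      Nat.cast_one, div_one] at this
    rw [this]
    field_simp

/-! ### Exchanging the integrals -/

/-- For a finite positive measure `m` on `[0,∞)` with all moments finite and any `λ` with
`Im λ < 0`, `∫ (e^{−iλx} − 1)/x dm(x) = ∫_0^∞ g(y) e^{iy/λ} dy`, where the integrand on
the left is `−iλ` at `x = 0` and `g(y) = −∫ h(xy) dm(x)`. -/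
theorem integral_phi_eq_integral_g (m : Measure ℝ) [IsFiniteMeasure m]
    (hm_supp : m {x : ℝ | x < 0} = 0)
    (hm_mom : ∀ k : ℕ, Integrable (fun x => x ^ k) m)
    (lam : ℂ) (hlam : lam.im < 0) :
    (∫ x, (if x = (0 : ℝ) then -(Complex.I * lam)
        else (Complex.exp (-(Complex.I * lam * (x : ℂ))) - 1) / (x : ℂ)) ∂m)
      = ∫ y in Ioi (0 : ℝ),
          (gOfMeasure m y : ℂ) * Complex.exp (Complex.I * (y : ℂ) / lam) := by
  have hl0 : lam ≠ 0 := by rintro rfl; simp at hlam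
  have hx0 : ∀ᵐ x ∂m, 0 ≤ x := by
    rw [ae_iff]
    simpa using hm_supp
  have hexp : Integrable (fun y : ℝ => cexp (I * (y : ℂ) / lam)) (volume.restrict (Ioi 0)) := by
    have hr : 0 < (-I / lam).re := by
      have : (-I / lam).re = -lam.im / normSq lam := by simp [Complex.div_re]
      rw [this]
      exact div_pos (by linarith) (normSq_pos.2 hl0)
    refine (integrableOn_pow_mul_cexp 0 hr).congr (Filter.Eventually.of_forall fun y => ?_)
    have : I * (y : ℂ) / lam = -(-I / lam * y) := by ring
    simp only [this, pow_zero, one_mul]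
  have hprod : Integrable (Function.uncurry fun x y : ℝ =>
      -(besselh (x * y) : ℂ) * cexp (I * (y : ℂ) / lam)) (m.prod (volume.restrict (Ioi 0))) := by
    have hb := (integrable_const (μ := m) (1 : ℂ)).mul_prod hexp
    refine hb.mono ?_ ?_
    · have := continuous_besselh
      refine Continuous.aestronglyMeasurable ?_
      unfold Function.uncurry
      fun_prop
    · have h1 := Measure.quasiMeasurePreserving_fst (μ := m)
        (ν := volume.restrict (Ioi (0 : ℝ))) |>.ae hx0
      have h2 := Measure.quasiMeasurePreserving_snd (μ := m)
        (ν := volume.restrict (Ioi (0 : ℝ))) |>.ae (ae_restrict_mem measurableSet_Ioi)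
      filter_upwards [h1, h2] with p hp1 hp2
      simp only [Function.uncurry, norm_mul, norm_neg, Complex.norm_real, norm_one]
      gcongr
      exact abs_besselh_le_one (mul_nonneg hp1 (le_of_lt hp2))
  calc _ = ∫ x, (∫ y in Ioi (0 : ℝ), -(besselh (x * y) : ℂ) * cexp (I * (y : ℂ) / lam)) ∂m := by
        refine integral_congr_ae ?_
        filter_upwards [hx0] with x hx
        exact laplace_besselh hx hlam
    _ = ∫ y in Ioi (0 : ℝ), ∫ x, -(besselh (x * y) : ℂ) * cexp (I * (y : ℂ) / lam) ∂m :=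
        integral_integral_swap hprod
    _ = _ := by
        congr 1
        funext y
        rw [integral_mul_const, integral_neg, integral_complex_ofReal, gOfMeasure, Complex.ofReal_neg]
end
end

section
/- For every α ∈ (0,2) and every z ∈ ℂ with Im z > 0, one has ∫_0^∞ (e^{itz} − 1) t^{−α/2 − 1} dt = Γ(−α/2) · (−iz)^{α/2}, where Γ is the Gamma function and the complex power is taken with respect to the principal branch (argument in (−π,π), cut along the negative real axis). Equivalently, there is a nonzero constant c_α = i^{α/2}/Γ(−α/2), depending only on α, such that z^{α/2} = c_α ∫_0^∞ (e^{itz} − 1) t^{−α/2−1} dt for all z in the open upper half-plane. -/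
/-!
With `w = -iz` and `s = α / 2`, the claim is `G(w) = Γ(-s) w ^ s` on the right half-plane, where
`G(w) = ∫_0^∞ (e^{-tw} - 1) t^{-s-1} dt`. Neither integration by parts nor rotation of contours is
needed: the substitution `t ↦ rt` gives the homogeneity `G(rw) = r ^ s G(w)` for `r > 0`, and
differentiating at `r = 1` gives Euler's equation `w G'(w) = s G(w)`. Hence `G(w) w ^ (-s)` has zero
derivative and equals its value `G(1)` at `w = 1`. Differentiating under the integral sign,
`G'(1) = -∫_0^∞ e^{-t} t^{-s} dt = -Γ(1 - s) = s Γ(-s)`, so Euler's equation at `1` gives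
`G(1) = Γ(-s)`. The second form of the claim follows from `z ^ s = i ^ s (-iz) ^ s`, valid since the
arguments of `i` and `-iz` add up to a number in `(0, π)`.
-/

open MeasureTheory Complex
noncomputable section

/-- The integral `∫_0^∞ (e^{-tw} - 1) t^{-s-1} dt`, a function of `w` in the right half-plane. -/
def expSubOneIntegral (s : ℝ) (w : ℂ) : ℂ :=
  ∫ t in Set.Ioi (0 : ℝ), (Complex.exp (-(t * w)) - 1) * ((t ^ (-s - 1) : ℝ) : ℂ)

lemma norm_exp_neg_sub_one_le_two {x : ℂ} (hx : 0 ≤ x.re) : ‖Complex.exp (-x) - 1‖ ≤ 2 := by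
  have h1 : ‖Complex.exp (-x)‖ ≤ 1 := by
    rw [Complex.norm_exp]; simpa using hx
  calc ‖Complex.exp (-x) - 1‖ ≤ ‖Complex.exp (-x)‖ + ‖(1 : ℂ)‖ := norm_sub_le _ _
    _ ≤ 2 := by rw [norm_one]; linarith

lemma norm_exp_neg_sub_one_le {x : ℂ} (hx : 0 ≤ x.re) :
    ‖Complex.exp (-x) - 1‖ ≤ 2 * ‖x‖ := by
  rcases le_total ‖x‖ 1 with h | h
  · simpa using Complex.norm_exp_sub_one_le (x := -x) (by simpa using h)
  · linarith [norm_exp_neg_sub_one_le_two hx]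

lemma measurable_expSubOne (s : ℝ) (w : ℂ) :
    Measurable fun t : ℝ => (Complex.exp (-(t * w)) - 1) * ((t ^ (-s - 1) : ℝ) : ℂ) := by
  fun_prop

lemma integrableOn_expSubOne {s : ℝ} (h0 : 0 < s) (h1 : s < 1) {w : ℂ} (hw : 0 < w.re) :
    IntegrableOn (fun t : ℝ => (Complex.exp (-(t * w)) - 1) * ((t ^ (-s - 1) : ℝ) : ℂ))
      (Set.Ioi 0) := by
  have hre : ∀ t : ℝ, 0 < t → 0 ≤ ((t : ℂ) * w).re := fun t ht => by
    rw [Complex.re_ofReal_mul]; positivity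
  have hmeas := measurable_expSubOne s w
  rw [← Set.Ioc_union_Ioi_eq_Ioi zero_le_one]
  refine IntegrableOn.union ?_ ?_
  · have hi : IntegrableOn (fun t : ℝ => 2 * ‖w‖ * t ^ (-s)) (Set.Ioc 0 1) := by
      have := intervalIntegral.intervalIntegrable_rpow' (a := 0) (b := 1) (r := -s) (by linarith)
      rw [intervalIntegrable_iff, Set.uIoc_of_le zero_le_one] at this
      exact this.const_mul _
    refine Integrable.mono' hi hmeas.aestronglyMeasurable ?_
    refine (ae_restrict_iff' measurableSet_Ioc).mpr (.of_forall fun t ht => ?_)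
    have hp : 0 < t ^ (-s - 1) := Real.rpow_pos_of_pos ht.1 _
    rw [norm_mul, Complex.norm_real, Real.norm_of_nonneg hp.le]
    calc _ ≤ 2 * ‖(t : ℂ) * w‖ * t ^ (-s - 1) := by
          gcongr; exact norm_exp_neg_sub_one_le (hre t ht.1)
      _ = 2 * ‖w‖ * t ^ (-s) := by
          rw [norm_mul, Complex.norm_real, Real.norm_of_nonneg ht.1.le,
            Real.rpow_sub_one ht.1.ne']
          field [ht.1.ne']
  · have hi : IntegrableOn (fun t : ℝ => 2 * t ^ (-s - 1)) (Set.Ioi 1) :=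
      (integrableOn_Ioi_rpow_of_lt (by linarith) one_pos).const_mul _
    refine Integrable.mono' hi hmeas.aestronglyMeasurable ?_
    refine (ae_restrict_iff' measurableSet_Ioi).mpr (.of_forall fun t ht => ?_)
    have ht0 : 0 < t := one_pos.trans ht
    have hp : 0 < t ^ (-s - 1) := Real.rpow_pos_of_pos ht0 _
    rw [norm_mul, Complex.norm_real, Real.norm_of_nonneg hp.le]
    gcongr
    exact norm_exp_neg_sub_one_le_two (hre t ht0)

lemma hasDerivAt_expSubOneIntegral {s : ℝ} (h0 : 0 < s) (h1 : s < 1) {w : ℂ} (hw : 0 < w.re) :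
    HasDerivAt (expSubOneIntegral s)
      (∫ t in Set.Ioi (0 : ℝ), -(Complex.exp (-(t * w)) * ((t ^ (-s) : ℝ) : ℂ))) w := by
  -- On `{v | re w / 2 < re v}` the differentiated integrand is bounded by `t^{-s} e^{-t re w / 2}`.
  have hs : {v : ℂ | w.re / 2 < v.re} ∈ nhds w :=
    (isOpen_lt continuous_const Complex.continuous_re).mem_nhds (by simp; linarith)
  have hb := integrableOn_rpow_mul_exp_neg_mul_rpow (p := 1) (s := -s) (b := w.re / 2)
    (by linarith) one_pos (by linarith)
  refine (hasDerivAt_integral_of_dominated_loc_of_deriv_le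
    (F := fun (v : ℂ) (t : ℝ) => (Complex.exp (-(t * v)) - 1) * ((t ^ (-s - 1) : ℝ) : ℂ))
    (F' := fun (v : ℂ) (t : ℝ) => -(Complex.exp (-(t * v)) * ((t ^ (-s) : ℝ) : ℂ)))
    hs (.of_forall fun v => (measurable_expSubOne s v).aestronglyMeasurable)
    (integrableOn_expSubOne h0 h1 hw) ?_ ?_ hb ?_).2
  · exact Measurable.aestronglyMeasurable (by fun_prop)
  · refine (ae_restrict_iff' measurableSet_Ioi).mpr (.of_forall fun t ht v hv => ?_)
    have ht : 0 < t := ht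
    have hv : w.re / 2 < v.re := hv
    have hp : 0 < t ^ (-s) := Real.rpow_pos_of_pos ht _
    rw [norm_neg, norm_mul, Complex.norm_real, Real.norm_of_nonneg hp.le, Complex.norm_exp,
      mul_comm, Complex.neg_re, Complex.re_ofReal_mul, Real.rpow_one]
    gcongr
    nlinarith
  · refine (ae_restrict_iff' measurableSet_Ioi).mpr (.of_forall fun t ht v _ => ?_)
    have ht : 0 < t := ht
    have hd : HasDerivAt (fun v : ℂ => -((t : ℂ) * v)) (-(t : ℂ)) v := by
      simpa using! ((hasDerivAt_id v).const_mul (t : ℂ)).neg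
    convert! (hd.cexp.sub_const 1).mul_const ((t ^ (-s - 1) : ℝ) : ℂ) using 1
    rw [Real.rpow_sub_one ht.ne']
    have : (t : ℂ) ≠ 0 := Complex.ofReal_ne_zero.mpr ht.ne'
    push_cast
    field

lemma expSubOneIntegral_real_mul (s : ℝ) (w : ℂ) {r : ℝ} (hr : 0 < r) :
    expSubOneIntegral s (r * w) = ((r ^ s : ℝ) : ℂ) * expSubOneIntegral s w := by
  have h := integral_comp_mul_left_Ioi
    (fun t : ℝ => (Complex.exp (-(t * w)) - 1) * ((t ^ (-s - 1) : ℝ) : ℂ)) 0 hr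
  rw [mul_zero] at h
  change _ = r⁻¹ • expSubOneIntegral s w at h
  have h2 : expSubOneIntegral s (r * w) = ((r ^ (s + 1) : ℝ) : ℂ) *
      ∫ t in Set.Ioi (0 : ℝ), (Complex.exp (-(((r * t : ℝ) : ℂ) * w)) - 1) *
        (((r * t) ^ (-s - 1) : ℝ) : ℂ) := by
    rw [← integral_const_mul]
    refine setIntegral_congr_fun measurableSet_Ioi fun t ht => ?_
    have ht : 0 < t := ht
    have e : t ^ (-s - 1) = r ^ (s + 1) * (r * t) ^ (-s - 1) := by
      rw [Real.mul_rpow hr.le ht.le, ← mul_assoc, ← Real.rpow_add hr]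
      simp
    simp only [e]
    push_cast
    rw [show -((t : ℂ) * (r * w)) = -(r * t * w) by ring]
    ring
  rw [h2, h, Complex.real_smul, ← mul_assoc, ← Complex.ofReal_mul, Real.rpow_add_one hr.ne',
    mul_inv_cancel_right₀ hr.ne']

/-- Euler's equation `w G'(w) = s G(w)`, from differentiating `G(rw) = r ^ s G(w)` at `r = 1`. -/
lemma euler_expSubOneIntegral {s : ℝ} {w d : ℂ} (hd : HasDerivAt (expSubOneIntegral s) d w) :
    d * w = s * expSubOneIntegral s w := by
  have hlin : HasDerivAt (fun r : ℝ => (r : ℂ) * w) w 1 := by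
    simpa using (Complex.ofRealCLM.hasDerivAt (x := (1 : ℝ))).mul_const w
  have hA : HasDerivAt (fun r : ℝ => expSubOneIntegral s (r * w)) (d * w) 1 := by
    have hd' : HasDerivAt (expSubOneIntegral s) d (((1 : ℝ) : ℂ) * w) := by simpa using hd
    exact hd'.comp (1 : ℝ) hlin
  have hB : HasDerivAt (fun r : ℝ => ((r ^ s : ℝ) : ℂ) * expSubOneIntegral s w)
      (s * expSubOneIntegral s w) 1 := by
    have := (Real.hasDerivAt_rpow_const (x := 1) (p := s) (Or.inl one_ne_zero)).ofReal_comp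
    simpa using this.mul_const (expSubOneIntegral s w)
  refine hA.unique (hB.congr_of_eventuallyEq ?_)
  filter_upwards [lt_mem_nhds (one_pos : (0 : ℝ) < 1)] with r hr
  exact expSubOneIntegral_real_mul s w hr

lemma expSubOneIntegral_one {s : ℝ} (h0 : 0 < s) (h1 : s < 1) :
    expSubOneIntegral s 1 = Complex.Gamma (-s) := by
  have hs : (s : ℂ) ≠ 0 := Complex.ofReal_ne_zero.mpr h0.ne'
  have he := euler_expSubOneIntegral (hasDerivAt_expSubOneIntegral h0 h1 (w := 1) (by simp))
  have hG : ∫ t in Set.Ioi (0 : ℝ), -(Complex.exp (-(t * 1)) * ((t ^ (-s) : ℝ) : ℂ))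
      = -Complex.Gamma (-s + 1) := by
    rw [Complex.Gamma_eq_integral (by simp [h1]), Complex.GammaIntegral, ← integral_neg]
    refine setIntegral_congr_fun measurableSet_Ioi fun t ht => ?_
    have ht : 0 < t := ht
    simp [Complex.ofReal_cpow ht.le]
  rw [hG, Complex.Gamma_add_one _ (neg_ne_zero.mpr hs)] at he
  refine mul_left_cancel₀ hs ?_
  rw [← he]
  ring

lemma expSubOneIntegral_eq {s : ℝ} (h0 : 0 < s) (h1 : s < 1) {w : ℂ} (hw : 0 < w.re) :
    expSubOneIntegral s w = Complex.Gamma (-s) * w ^ (s : ℂ) := by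
  let U : Set ℂ := {v | 0 < v.re}
  have hU : IsOpen U := isOpen_lt continuous_const Complex.continuous_re
  have hne : ∀ v ∈ U, v ≠ 0 := fun v hv h => by simp [U, h] at hv
  have hderiv : ∀ v ∈ U, HasDerivAt (fun v => expSubOneIntegral s v * v ^ (-(s : ℂ))) 0 v := by
    intro v hv
    have hd := hasDerivAt_expSubOneIntegral h0 h1 hv
    have he := euler_expSubOneIntegral hd
    have hv0 := hne v hv
    convert! hd.mul ((hasDerivAt_id v).cpow_const (c := -(s : ℂ)) (Or.inl hv)) using 1
    simp only [id, mul_one]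
    rw [Complex.cpow_sub _ _ hv0, Complex.cpow_one]
    field_simp
    linear_combination -v ^ (-(s : ℂ)) * he
  have hconst := hU.is_const_of_deriv_eq_zero (convex_halfSpace_re_gt 0).isPreconnected
    (fun v hv => (hderiv v hv).differentiableAt.differentiableWithinAt)
    (fun v hv => (hderiv v hv).deriv) hw (show (1 : ℂ) ∈ U by simp [U])
  simp only [Complex.one_cpow, mul_one, expSubOneIntegral_one h0 h1] at hconst
  rw [← hconst, mul_assoc, ← Complex.cpow_add _ _ (hne w hw)]
  simp

lemma cpow_eq_I_cpow_mul {z : ℂ} (hz : 0 < z.im) (a : ℂ) :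
    z ^ a = Complex.I ^ a * (-Complex.I * z) ^ a := by
  have hre : 0 < (-Complex.I * z).re := by simpa using hz
  have hne : -Complex.I * z ≠ 0 := fun h => by simp [h] at hre
  have hz0 : z ≠ 0 := fun h => by simp [h] at hz
  have harg := abs_lt.mp (Complex.abs_arg_lt_pi_div_two_iff.mpr (Or.inl hre))
  have hlog := Complex.log_mul (x := Complex.I) (y := -Complex.I * z) Complex.I_ne_zero hne
    (by rw [Complex.arg_I]; constructor <;> linarith [harg.1, harg.2, Real.pi_pos])
  rw [show Complex.I * (-Complex.I * z) = z by
    linear_combination (-z) * Complex.I_mul_I] at hlog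
  rw [Complex.cpow_def_of_ne_zero hz0, Complex.cpow_def_of_ne_zero Complex.I_ne_zero,
    Complex.cpow_def_of_ne_zero hne, ← Complex.exp_add, hlog]
  ring_nf

/-- For `α ∈ (0,2)` and `z` in the open upper half-plane,
`∫_0^∞ (e^{itz} − 1) t^{−α/2−1} dt = Γ(−α/2)·(−iz)^{α/2}` (principal branch),
and equivalently `z^{α/2} = c_α ∫_0^∞ (e^{itz} − 1) t^{−α/2−1} dt` with the nonzero
constant `c_α = i^{α/2}/Γ(−α/2)`. -/
theorem integral_exp_sub_one_rpow (α : ℝ) (hα : α ∈ Set.Ioo (0 : ℝ) 2) :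
    (∀ z : ℂ, 0 < z.im →
      (∫ t in Set.Ioi (0 : ℝ),
          (Complex.exp (Complex.I * t * z) - 1) * ((t ^ (-(α / 2) - 1) : ℝ) : ℂ))
        = Complex.Gamma (-(α : ℂ) / 2) * (-Complex.I * z) ^ ((α : ℂ) / 2))
    ∧ Complex.I ^ ((α : ℂ) / 2) / Complex.Gamma (-(α : ℂ) / 2) ≠ 0
    ∧ (∀ z : ℂ, 0 < z.im →
      z ^ ((α : ℂ) / 2)
        = (Complex.I ^ ((α : ℂ) / 2) / Complex.Gamma (-(α : ℂ) / 2)) *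
            ∫ t in Set.Ioi (0 : ℝ),
              (Complex.exp (Complex.I * t * z) - 1) * ((t ^ (-(α / 2) - 1) : ℝ) : ℂ)) := by
  have h0 : 0 < α / 2 := by linarith [hα.1]
  have h1 : α / 2 < 1 := by linarith [hα.2]
  have hmain : ∀ z : ℂ, 0 < z.im →
      (∫ t in Set.Ioi (0 : ℝ),
          (Complex.exp (Complex.I * t * z) - 1) * ((t ^ (-(α / 2) - 1) : ℝ) : ℂ))
        = Complex.Gamma (-(α : ℂ) / 2) * (-Complex.I * z) ^ ((α : ℂ) / 2) := by
    intro z hz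
    have h := expSubOneIntegral_eq h0 h1 (w := -Complex.I * z) (by simpa using hz)
    rw [expSubOneIntegral] at h
    push_cast at h
    rw [neg_div, ← h]
    refine setIntegral_congr_fun measurableSet_Ioi fun t _ => ?_
    rw [show -((t : ℂ) * (-Complex.I * z)) = Complex.I * t * z by ring]
  have hΓ : Complex.Gamma (-(α : ℂ) / 2) ≠ 0 := by
    have hs : -(α : ℂ) / 2 ≠ 0 := by
      simpa using hα.1.ne'
    have h := Complex.Gamma_ne_zero_of_re_pos (s := -(α : ℂ) / 2 + 1)
      (by
        rw [show -(α : ℂ) / 2 + 1 = ((-(α / 2) + 1 : ℝ) : ℂ) by push_cast; ring,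
          Complex.ofReal_re]
        linarith)
    rw [Complex.Gamma_add_one _ hs] at h
    exact right_ne_zero_of_mul h
  refine ⟨hmain, div_ne_zero ?_ hΓ, fun z hz => ?_⟩
  · simp [Complex.cpow_eq_zero_iff]
  · rw [hmain z hz, cpow_eq_I_cpow_mul hz, ← mul_assoc, div_mul_cancel₀ _ hΓ]
end
end

section
/- Let A be an N×N Hermitian matrix and let B be an (N−1)×(N−1) principal minor of A (obtained by deleting the ℓ-th row and the ℓ-th column for some ℓ). Then for every function f : ℝ → ℂ with total variation norm ‖f‖_TV ≤ 1 and lim_{|x|→∞} f(x) = 0, one has | Σ_{i=1}^N f(λ_i(A)) − Σ_{i=1}^{N−1} f(λ_i(B)) | ≤ 1, where λ_1(A),…,λ_N(A) and λ_1(B),…,λ_{N−1}(B) are the eigenvalues (with multiplicity) of A and B. -/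
/-!
Sort the eigenvalues of `A` as `a 0 ≤ … ≤ a n` and those of `B` as `b 0 ≤ … ≤ b (n - 1)`.

Cauchy interlacing `a i ≤ b i ≤ a (i + 1)` comes from a dimension count: extending the eigenvectors
of `B` by a zero coordinate gives orthonormal vectors of `ℂ ^ (n + 1)` on which the quadratic form
of `A` is that of `B`. The span of the first `i + 1` of these meets the span of the last `n + 1 - i`
eigenvectors of `A` in a nonzero vector `x`, and comparing `⟪x, A x⟫` computed in the two ways gives
`a i ≤ b i`; the other inequality is similar (`le_of_card_lt`, `interlacing`).

The difference of the two sums is then `f (a 0) + ∑ i, (f (a (i + 1)) - f (b i))`. For `R ≤ a 0`, it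
differs by `f R` from a sum of increments of `f` along the monotone sequence
`R, a 0, b 0, a 1, b 1, …`, which is at most `‖f‖_TV ≤ 1` in norm; letting `R → -∞` removes `f R`
(`norm_alternating_sum_le`).
-/

open MeasureTheory Matrix Filter
open scoped ENNReal
noncomputable section

/-- The total variation norm of `f : ℝ → ℂ`:
`‖f‖_TV = sup Σ_{k∈ℤ} |f(x_{k+1}) − f(x_k)|` over all nondecreasing sequences `(x_k)_{k∈ℤ}`. -/
def tvNorm (f : ℝ → ℂ) : ℝ≥0∞ :=
  ⨆ (x : ℤ → ℝ) (_ : Monotone x), ∑' k : ℤ, (‖f (x (k + 1)) - f (x k)‖₊ : ℝ≥0∞)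

/-- Every finite sum of increments along a monotone sequence is bounded by the total variation. -/
lemma sum_increments_le {f : ℝ → ℂ} (htv : tvNorm f ≤ 1) (u : ℕ → ℝ) (hu : Monotone u) (N : ℕ) :
    ∑ k ∈ Finset.range N, ‖f (u (k + 1)) - f (u k)‖ ≤ 1 := by
  have h1 : ∑' k : ℤ, (‖f (u (k + 1).toNat) - f (u k.toNat)‖₊ : ℝ≥0∞) ≤ 1 := by
    refine le_trans ?_ htv
    exact le_iSup₂_of_le (fun k : ℤ => u k.toNat) (fun x y h => hu (Int.toNat_le_toNat h)) le_rfl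
  have h2 := (ENNReal.sum_le_tsum ((Finset.range N).map Nat.castEmbedding)).trans h1
  rw [Finset.sum_map] at h2
  have h3 : ∀ k : ℕ, ((k : ℤ) + 1).toNat = k + 1 := fun k => by omega
  simp only [Nat.castEmbedding_apply, Int.toNat_natCast, h3] at h2
  rw [← ENNReal.ofNNReal_finsetSum, ← ENNReal.coe_one, ENNReal.coe_le_coe] at h2
  simpa using (NNReal.coe_le_coe.2 h2)

lemma norm_alternating_sum_le {f : ℝ → ℂ} (htv : tvNorm f ≤ 1) (hlim : Tendsto f (cocompact ℝ) (nhds 0))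
    (a b : ℕ → ℝ) (hab : ∀ i, a i ≤ b i) (hba : ∀ i, b i ≤ a (i + 1)) (n : ℕ) :
    ‖(∑ i ∈ Finset.range (n + 1), f (a i)) - ∑ i ∈ Finset.range n, f (b i)‖ ≤ 1 := by
  set S := (∑ i ∈ Finset.range (n + 1), f (a i)) - ∑ i ∈ Finset.range n, f (b i) with hS
  have key : ∀ R ≤ a 0, ‖S - f R‖ ≤ 1 := by
    intro R hR
    let u : ℕ → ℝ := fun k => match k with
      | 0 => R
      | k + 1 => if k % 2 = 0 then a (k / 2) else b (k / 2)
    have hodd : ∀ m, u (2 * m + 1) = a m := fun m => by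
      change (if (2 * m) % 2 = 0 then a (2 * m / 2) else b (2 * m / 2)) = a m
      rw [if_pos (by omega)]; congr 1; omega
    have heven : ∀ m, u (2 * m + 2) = b m := fun m => by
      change (if (2 * m + 1) % 2 = 0 then a ((2 * m + 1) / 2) else b ((2 * m + 1) / 2)) = b m
      rw [if_neg (by omega)]; congr 1; omega
    have hu : Monotone u := by
      refine monotone_nat_of_le_succ fun k => ?_
      rcases k with _ | k
      · exact (hodd 0).symm ▸ hR
      · obtain ⟨m, rfl | rfl⟩ := Nat.even_or_odd' k
        · rw [hodd, heven]; exact hab m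
        · rw [show 2 * m + 1 + 1 + 1 = 2 * (m + 1) + 1 by ring, hodd, heven]; exact hba m
    have hind : ∀ m, ‖(∑ i ∈ Finset.range (m + 1), f (a i)) - ∑ i ∈ Finset.range m, f (b i) - f R‖ ≤
        ∑ k ∈ Finset.range (2 * m + 1), ‖f (u (k + 1)) - f (u k)‖ := by
      intro m
      induction m with
      | zero => simp [u]
      | succ m ih =>
        rw [Finset.sum_range_succ _ (m + 1), Finset.sum_range_succ _ m,
          show 2 * (m + 1) + 1 = 2 * m + 1 + 1 + 1 by ring, Finset.sum_range_succ _ (2 * m + 1 + 1),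
          Finset.sum_range_succ _ (2 * m + 1),
          show 2 * m + 1 + 1 + 1 = 2 * (m + 1) + 1 by ring, hodd (m + 1), heven m]
        have h0 := norm_nonneg (f (b m) - f (u (2 * m + 1)))
        have h1 := norm_add_le
          ((∑ i ∈ Finset.range (m + 1), f (a i)) - ∑ i ∈ Finset.range m, f (b i) - f R)
          (f (a (m + 1)) - f (b m))
        rw [Finset.sum_range_succ _ m] at h1 ih
        refine le_trans (le_of_eq ?_) (h1.trans (by linarith))
        congr 1; simp only [Finset.sum_range_succ]; ring
    exact (hind n).trans (sum_increments_le htv u hu _)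
  have hl : Tendsto f atBot (nhds 0) := hlim.mono_left atBot_le_cocompact
  have hl2 : Tendsto (fun R => ‖S - f R‖) atBot (nhds ‖S‖) := by
    simpa using (hl.const_sub S).norm
  exact le_of_tendsto hl2 ((eventually_le_atBot (a 0)).mono key)

/-- An orthonormal family diagonalizing the form of `T` diagonally computes `⟪x, T x⟫`
on its span. -/
lemma inner_sum_diag {E ι : Type*} [NormedAddCommGroup E] [InnerProductSpace ℂ E] [Fintype ι]
    [DecidableEq ι] (T : E →ₗ[ℂ] E) (u : ι → E) (α : ι → ℝ)
    (hα : ∀ i j, inner ℂ (u i) (T (u j)) = if i = j then (α i : ℂ) else 0) (c : ι → ℂ) :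
    (inner ℂ (∑ i, c i • u i) (T (∑ i, c i • u i))).re = ∑ i, α i * ‖c i‖ ^ 2 := by
  simp only [map_sum, map_smul, sum_inner, inner_sum, inner_smul_left, inner_smul_right, hα]
  simp only [mul_ite, mul_zero, Finset.sum_ite_eq', Finset.mem_univ, if_true,
    Complex.re_sum]
  refine Finset.sum_congr rfl fun i _ => ?_
  have : (starRingEnd ℂ) (c i) * (c i * (α i : ℂ)) = ((α i * ‖c i‖ ^ 2 : ℝ) : ℂ) := by
    rw [← mul_assoc, Complex.conj_mul']; push_cast; ring
  rw [mul_left_comm, this, Complex.ofReal_re]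

/-- The dimension count: two orthonormal families with more than `dim E` members in total have
spans meeting in a nonzero vector, where the two bounds on the form of `T` can be compared. -/
lemma le_of_card_lt {E ι κ : Type*} [NormedAddCommGroup E] [InnerProductSpace ℂ E]
    [FiniteDimensional ℂ E] [Fintype ι] [Fintype κ] [DecidableEq ι] [DecidableEq κ]
    (T : E →ₗ[ℂ] E) (u : ι → E) (v : κ → E)
    (hu : Orthonormal ℂ u) (hv : Orthonormal ℂ v) (α : ι → ℝ) (β : κ → ℝ)
    (hα : ∀ i j, inner ℂ (u i) (T (u j)) = if i = j then (α i : ℂ) else 0)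
    (hβ : ∀ i j, inner ℂ (v i) (T (v j)) = if i = j then (β i : ℂ) else 0)
    (s t : ℝ) (hs : ∀ i, s ≤ α i) (ht : ∀ i, β i ≤ t)
    (hcard : Module.finrank ℂ E < Fintype.card ι + Fintype.card κ) : s ≤ t := by
  have hdep : ¬ LinearIndependent ℂ (Sum.elim u v) := fun h => by
    have := h.fintype_card_le_finrank
    rw [Fintype.card_sum] at this
    omega
  obtain ⟨g, hg, k, hk⟩ := Fintype.not_linearIndependent_iff.1 hdep
  simp only [Fintype.sum_sum_type, Sum.elim_inl, Sum.elim_inr] at hg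
  set c : ι → ℂ := fun i => g (Sum.inl i) with hc
  set d : κ → ℂ := fun i => - g (Sum.inr i) with hd
  have hx : ∑ i, c i • u i = ∑ i, d i • v i := by
    simp only [hd, neg_smul, Finset.sum_neg_distrib]
    exact eq_neg_of_add_eq_zero_left hg
  have hidu : ∀ i j, inner ℂ (u i) ((LinearMap.id : E →ₗ[ℂ] E) (u j)) =
      if i = j then ((1 : ℝ) : ℂ) else 0 := fun i j => by
    simpa using orthonormal_iff_ite.1 hu i j
  have hidv : ∀ i j, inner ℂ (v i) ((LinearMap.id : E →ₗ[ℂ] E) (v j)) =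
      if i = j then ((1 : ℝ) : ℂ) else 0 := fun i j => by
    simpa using orthonormal_iff_ite.1 hv i j
  have n1 := inner_sum_diag _ u (fun _ => 1) hidu c
  have n2 := inner_sum_diag _ v (fun _ => 1) hidv d
  have q1 := inner_sum_diag T u α hα c
  have q2 := inner_sum_diag T v β hβ d
  rw [← hx] at n2 q2
  simp only [one_mul] at n1 n2
  rw [n1] at n2
  rw [q1] at q2
  have l1 : s * ∑ i, ‖c i‖ ^ 2 ≤ ∑ i, α i * ‖c i‖ ^ 2 := by
    rw [Finset.mul_sum]
    exact Finset.sum_le_sum fun i _ => mul_le_mul_of_nonneg_right (hs i) (by positivity)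
  have l2 : ∑ i, β i * ‖d i‖ ^ 2 ≤ t * ∑ i, ‖d i‖ ^ 2 := by
    rw [Finset.mul_sum]
    exact Finset.sum_le_sum fun i _ => mul_le_mul_of_nonneg_right (ht i) (by positivity)
  have hpos : 0 < ∑ i, ‖c i‖ ^ 2 := by
    rcases k with k | k
    · exact Finset.sum_pos' (fun i _ => by positivity)
        ⟨k, Finset.mem_univ _, by have := norm_pos_iff.2 hk; positivity⟩
    · rw [n2]
      exact Finset.sum_pos' (fun i _ => by positivity)
        ⟨k, Finset.mem_univ _, by
          have : 0 < ‖d k‖ := by rw [hd, norm_neg]; exact norm_pos_iff.2 hk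
          positivity⟩
  rw [← n2] at l2
  exact le_of_mul_le_mul_right (by linarith) hpos

/-- Extension of a vector by a zero in coordinate `ℓ`. -/
def extendZero {n : ℕ} (ℓ : Fin (n + 1)) (x : EuclideanSpace ℂ (Fin n)) :
    EuclideanSpace ℂ (Fin (n + 1)) :=
  WithLp.toLp 2 (ℓ.insertNth (α := fun _ => ℂ) 0 x.ofLp)

lemma inner_extendZero {n : ℕ} (ℓ : Fin (n + 1)) (x y : EuclideanSpace ℂ (Fin n)) :
    inner ℂ (extendZero ℓ x) (extendZero ℓ y) = inner ℂ x y := by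
  simp [extendZero, PiLp.inner_apply, Fin.sum_univ_succAbove _ ℓ]

lemma inner_extendZero_toEuclideanLin {n : ℕ} (A : Matrix (Fin (n + 1)) (Fin (n + 1)) ℂ)
    (ℓ : Fin (n + 1)) (x y : EuclideanSpace ℂ (Fin n)) :
    inner ℂ (extendZero ℓ x) (toEuclideanLin A (extendZero ℓ y)) =
      inner ℂ x (toEuclideanLin (A.submatrix ℓ.succAbove ℓ.succAbove) y) := by
  simp [extendZero, PiLp.inner_apply, Fin.sum_univ_succAbove _ ℓ, Matrix.mulVec, dotProduct]

lemma inner_eigenvectorBasis {m : ℕ} {A : Matrix (Fin m) (Fin m) ℂ} (hA : A.IsHermitian)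
    (i j : Fin m) :
    inner ℂ (hA.eigenvectorBasis i) (toEuclideanLin A (hA.eigenvectorBasis j)) =
      if i = j then (hA.eigenvalues i : ℂ) else 0 := by
  have h : toEuclideanLin A (hA.eigenvectorBasis j) =
      (hA.eigenvalues j : ℂ) • hA.eigenvectorBasis j := by
    ext k
    have := congrFun (hA.mulVec_eigenvectorBasis j) k
    simpa using this
  rw [h, inner_smul_right, orthonormal_iff_ite.1 hA.eigenvectorBasis.orthonormal]
  split_ifs with hij
  · simp [hij]
  · simp

/-- **Cauchy interlacing** for increasing enumerations `σ`, `τ` of the two spectra. -/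
lemma interlacing {n : ℕ} {A : Matrix (Fin (n + 1)) (Fin (n + 1)) ℂ} (hA : A.IsHermitian)
    (ℓ : Fin (n + 1)) (σ : Equiv.Perm (Fin (n + 1))) (τ : Equiv.Perm (Fin n))
    (hσ : Monotone (hA.eigenvalues ∘ σ))
    (hτ : Monotone ((hA.submatrix ℓ.succAbove).eigenvalues ∘ τ)) (i : Fin n) :
    hA.eigenvalues (σ i.castSucc) ≤ (hA.submatrix ℓ.succAbove).eigenvalues (τ i) ∧
      (hA.submatrix ℓ.succAbove).eigenvalues (τ i) ≤ hA.eigenvalues (σ i.succ) := by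
  set hB := hA.submatrix ℓ.succAbove
  let u : Fin (n + 1) → EuclideanSpace ℂ (Fin (n + 1)) := fun j => hA.eigenvectorBasis (σ j)
  let v : Fin n → EuclideanSpace ℂ (Fin (n + 1)) := fun j => extendZero ℓ (hB.eigenvectorBasis (τ j))
  have hu : Orthonormal ℂ u := hA.eigenvectorBasis.orthonormal.comp σ σ.injective
  have hv : Orthonormal ℂ v := by
    rw [orthonormal_iff_ite]
    intro j k
    simp only [v, inner_extendZero]
    rw [orthonormal_iff_ite.1 hB.eigenvectorBasis.orthonormal]
    simp
  have hqu : ∀ j k, inner ℂ (u j) (toEuclideanLin A (u k)) =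
      if j = k then (hA.eigenvalues (σ j) : ℂ) else 0 := fun j k => by
    simp [u, inner_eigenvectorBasis]
  have hqv : ∀ j k, inner ℂ (v j) (toEuclideanLin A (v k)) =
      if j = k then (hB.eigenvalues (τ j) : ℂ) else 0 := fun j k => by
    simp only [v, inner_extendZero_toEuclideanLin]
    rw [inner_eigenvectorBasis hB]
    simp
  constructor
  · refine le_of_card_lt (toEuclideanLin A)
      (fun j : Set.Ici i.castSucc => u j) (fun j : Set.Iic i => v j)
      (hu.comp _ Subtype.val_injective) (hv.comp _ Subtype.val_injective)
      (fun j => hA.eigenvalues (σ j)) (fun j => hB.eigenvalues (τ j))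
      (fun j k => by simp [hqu, Subtype.ext_iff]) (fun j k => by simp [hqv, Subtype.ext_iff])
      _ _ (fun j => hσ j.2) (fun j => hτ j.2) ?_
    simp
    omega
  · refine le_of_card_lt (toEuclideanLin A)
      (fun j : Set.Ici i => v j) (fun j : Set.Iic i.succ => u j)
      (hv.comp _ Subtype.val_injective) (hu.comp _ Subtype.val_injective)
      (fun j => hB.eigenvalues (τ j)) (fun j => hA.eigenvalues (σ j))
      (fun j k => by simp [hqv, Subtype.ext_iff]) (fun j k => by simp [hqu, Subtype.ext_iff])
      _ _ (fun j => hτ j.2) (fun j => hσ j.2) ?_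
    simp
    omega

/-- Interlacing of eigenvalues: if `B` is a principal minor of the Hermitian matrix `A`
(deleting the `ℓ`-th row and column) and `f : ℝ → ℂ` has total variation norm at most one
and vanishes at infinity, then `|Σᵢ f(λᵢ(A)) − Σᵢ f(λᵢ(B))| ≤ 1`. -/
theorem interlacing_total_variation_bound (n : ℕ)
    (A : Matrix (Fin (n + 1)) (Fin (n + 1)) ℂ) (hA : A.IsHermitian) (ℓ : Fin (n + 1))
    (f : ℝ → ℂ) (htv : tvNorm f ≤ 1)
    (hlim : Tendsto f (cocompact ℝ) (nhds 0)) :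
    ‖(∑ i, f (hA.eigenvalues i))
        - ∑ i, f ((hA.submatrix ℓ.succAbove).eigenvalues i)‖ ≤ 1 := by
  set hB := hA.submatrix ℓ.succAbove
  let σ := Tuple.sort hA.eigenvalues
  let τ := Tuple.sort hB.eigenvalues
  have hinter := interlacing hA ℓ σ τ (Tuple.monotone_sort _) (Tuple.monotone_sort _)
  rw [← Equiv.sum_comp σ, ← Equiv.sum_comp τ]
  -- Both lists are continued to `ℕ` by the largest eigenvalue of `A`, which keeps them interlaced.
  let a : ℕ → ℝ := fun i => if h : i < n + 1 then hA.eigenvalues (σ ⟨i, h⟩)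
    else hA.eigenvalues (σ (Fin.last n))
  let b : ℕ → ℝ := fun i => if h : i < n then hB.eigenvalues (τ ⟨i, h⟩)
    else hA.eigenvalues (σ (Fin.last n))
  have hlast : ∀ i, n ≤ i → a i = hA.eigenvalues (σ (Fin.last n)) := fun i hi => by
    simp only [a]
    split_ifs with h
    · congr 2; ext; simp; omega
    · rfl
  have hab : ∀ i, a i ≤ b i := fun i => by
    by_cases h : i < n
    · simpa [a, b, h, h.le] using (hinter ⟨i, h⟩).1
    · rw [hlast i (by omega)]; simp [b, h]
  have hba : ∀ i, b i ≤ a (i + 1) := fun i => by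
    by_cases h : i < n
    · simpa [a, b, h] using (hinter ⟨i, h⟩).2
    · rw [hlast (i + 1) (by omega)]; simp [b, h]
  have := norm_alternating_sum_le htv hlim a b hab hba n
  rw [Finset.sum_range, Finset.sum_range] at this
  simpa [a, b, Fin.is_le] using this
end
end

section
/- Let H = [h_{ij}] be an N×N Hermitian matrix, let z ∈ ℂ∖ℝ, and set G = (z·I − H)^{-1}. Fix k ∈ {1,…,N}; let H_k be the (N−1)×(N−1) Hermitian matrix obtained from H by deleting its k-th row and k-th column, G_k = (z·I − H_k)^{-1}, and let a_k ∈ ℂ^{N−1} be the k-th column of H with its k-th entry removed. Then Tr G − Tr G_k = (1 + a_k^* G_k² a_k)/(z − h_{kk} − a_k^* G_k a_k) (in particular the denominator is nonzero), and moreover |Tr G − Tr G_k| ≤ π |Im z|^{-1}. -/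
open MeasureTheory Matrix
noncomputable section

/-!
Both claims follow from the Schur complement of the block `z - Hₖ` in `z - H`. Block inversion
(`trace_inv_fromBlocks_sub`) expresses `Tr G - Tr Gₖ` as `(1 + aᴴ Gₖ² a) / d` with
`d = z - hₖₖ - aᴴ Gₖ a`. The resolvent `R` of a Hermitian matrix commutes with `Rᴴ`, and
`R - Rᴴ = (z̄ - z) Rᴴ R`. The second identity gives `Im d = Im z (1 + ‖Gₖ a‖²)`, so `d ≠ 0`;
the first gives `|1 + aᴴ Gₖ² a| ≤ 1 + ‖Gₖ a‖²`. The quotient is therefore at most `|Im z|⁻¹`,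
which is stronger than the stated bound with the factor `π`.
-/

/-- The squared Euclidean norm of a complex vector. -/
def vecNormSq {m : Type*} [Fintype m] (v : m → ℂ) : ℝ := ∑ i, ‖v i‖ ^ 2

theorem vecNormSq_nonneg {m : Type*} [Fintype m] (v : m → ℂ) : 0 ≤ vecNormSq v :=
  Finset.sum_nonneg fun _ _ => by positivity

theorem star_dotProduct_self_eq {m : Type*} [Fintype m] (v : m → ℂ) :
    star v ⬝ᵥ v = (vecNormSq v : ℂ) := by
  simp only [dotProduct, vecNormSq, Pi.star_apply, Complex.ofReal_sum, Complex.ofReal_pow]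
  exact Finset.sum_congr rfl fun i _ => Complex.conj_mul' (v i)

theorem norm_star_dotProduct_le {m : Type*} [Fintype m] (u w : m → ℂ) :
    ‖star u ⬝ᵥ w‖ ≤ (vecNormSq u + vecNormSq w) / 2 := by
  have h : ‖star u ⬝ᵥ w‖ ≤ ∑ i, (‖u i‖ ^ 2 + ‖w i‖ ^ 2) / 2 := by
    refine (norm_sum_le _ _).trans (Finset.sum_le_sum fun i _ => ?_)
    rw [norm_mul, Pi.star_apply, norm_star]
    nlinarith [sq_nonneg (‖u i‖ - ‖w i‖)]
  rwa [← Finset.sum_div, Finset.sum_add_distrib] at h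

theorem isUnit_smul_one_sub {m : Type*} [Fintype m] [DecidableEq m] {A : Matrix m m ℂ}
    (hA : A.IsHermitian) {z : ℂ} (hz : z.im ≠ 0) : IsUnit (z • (1 : Matrix m m ℂ) - A) := by
  rw [isUnit_iff_isUnit_det, isUnit_iff_ne_zero]
  intro hdet
  obtain ⟨v, hv, hMv⟩ := exists_mulVec_eq_zero_iff.2 hdet
  have h1 : star v ⬝ᵥ (z • (1 : Matrix m m ℂ) - A) *ᵥ v = 0 := by rw [hMv, dotProduct_zero]
  rw [sub_mulVec, smul_mulVec, one_mulVec, dotProduct_sub, dotProduct_smul,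
    star_dotProduct_self_eq] at h1
  -- The quadratic form of `A` is real, so the imaginary part of `h1` reads `Im z * ‖v‖² = 0`.
  have h2 : (star v ⬝ᵥ A *ᵥ v).im = 0 := hA.im_star_dotProduct_mulVec_self v
  have h3 := congrArg Complex.im h1
  simp [h2, hz] at h3
  rw [vecNormSq, Finset.sum_eq_zero_iff_of_nonneg fun _ _ => by positivity] at h3
  exact hv (funext fun i => by simpa using h3 i (Finset.mem_univ i))

theorem conjTranspose_smul_one_sub {m : Type*} [DecidableEq m] {A : Matrix m m ℂ}
    (hA : A.IsHermitian) (z : ℂ) :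
    (z • (1 : Matrix m m ℂ) - A)ᴴ = star z • (1 : Matrix m m ℂ) - A := by
  rw [conjTranspose_sub, conjTranspose_smul, conjTranspose_one, hA.eq]

theorem resolvent_sub_conjTranspose {m : Type*} [Fintype m] [DecidableEq m] {A R : Matrix m m ℂ}
    (hA : A.IsHermitian) {z : ℂ} (hz : z.im ≠ 0) (hR : R = (z • (1 : Matrix m m ℂ) - A)⁻¹) :
    R - Rᴴ = (star z - z) • (Rᴴ * R) := by
  have hu := (isUnit_iff_isUnit_det _).1 (isUnit_smul_one_sub hA hz)
  have h1 : (z • (1 : Matrix m m ℂ) - A) * R = 1 := hR ▸ mul_nonsing_inv _ hu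
  have h2 : Rᴴ * (star z • (1 : Matrix m m ℂ) - A) = 1 := by
    rw [← conjTranspose_smul_one_sub hA, ← conjTranspose_mul, h1, conjTranspose_one]
  calc R - Rᴴ = (Rᴴ * (star z • (1 : Matrix m m ℂ) - A)) * R
        - Rᴴ * ((z • (1 : Matrix m m ℂ) - A) * R) := by rw [h1, h2, one_mul, mul_one]
    _ = Rᴴ * ((star z • (1 : Matrix m m ℂ) - A) - (z • (1 : Matrix m m ℂ) - A)) * R := by
        noncomm_ring
    _ = _ := by
        rw [sub_sub_sub_cancel_right, ← sub_smul, mul_smul_comm, smul_mul_assoc, mul_one]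

theorem resolvent_mul_conjTranspose_comm {m : Type*} [Fintype m] [DecidableEq m]
    {A R : Matrix m m ℂ} (hA : A.IsHermitian) {z : ℂ} (hR : R = (z • (1 : Matrix m m ℂ) - A)⁻¹) :
    R * Rᴴ = Rᴴ * R := by
  rw [hR, conjTranspose_nonsing_inv, conjTranspose_smul_one_sub hA, ← Matrix.mul_inv_rev,
    ← Matrix.mul_inv_rev]
  congr 1
  simp only [sub_mul, mul_sub, smul_mul_assoc, mul_smul_comm, one_mul, mul_one, smul_sub,
    smul_comm z (star z)]
  abel

theorem star_dotProduct_mul_mulVec {m : Type*} [Fintype m] (P Q : Matrix m m ℂ) (a : m → ℂ) :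
    star a ⬝ᵥ (Pᴴ * Q) *ᵥ a = star (P *ᵥ a) ⬝ᵥ Q *ᵥ a := by
  rw [star_mulVec, ← mulVec_mulVec, dotProduct_mulVec]

theorem im_star_dotProduct_resolvent {m : Type*} [Fintype m] [DecidableEq m] {A R : Matrix m m ℂ}
    (hA : A.IsHermitian) {z : ℂ} (hz : z.im ≠ 0) (hR : R = (z • (1 : Matrix m m ℂ) - A)⁻¹)
    (a : m → ℂ) : (star a ⬝ᵥ R *ᵥ a).im = -(z.im * vecNormSq (R *ᵥ a)) := by
  have h := congrArg (fun M => (star a ⬝ᵥ M *ᵥ a).im) (resolvent_sub_conjTranspose hA hz hR)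
  have h2 : star a ⬝ᵥ Rᴴ *ᵥ a = star (star a ⬝ᵥ R *ᵥ a) := by
    rw [dotProduct_mulVec, ← star_mulVec, star_dotProduct]
  simp only [sub_mulVec, dotProduct_sub, smul_mulVec, dotProduct_smul,
    star_dotProduct_mul_mulVec, star_dotProduct_self_eq, h2] at h
  simp at h
  linarith

/-- Normality of the resolvent gives `‖Rᴴ a‖ = ‖R a‖`, so the bound
`|⟨u, w⟩| ≤ (‖u‖² + ‖w‖²) / 2` applied to `aᴴ R² a = ⟨Rᴴ a, R a⟩` involves `R a` only. -/
theorem norm_star_dotProduct_resolvent_sq_le {m : Type*} [Fintype m] [DecidableEq m]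
    {A R : Matrix m m ℂ} (hA : A.IsHermitian) {z : ℂ}
    (hR : R = (z • (1 : Matrix m m ℂ) - A)⁻¹) (a : m → ℂ) :
    ‖star a ⬝ᵥ (R * R) *ᵥ a‖ ≤ vecNormSq (R *ᵥ a) := by
  have h1 : star a ⬝ᵥ (R * R) *ᵥ a = star (Rᴴ *ᵥ a) ⬝ᵥ R *ᵥ a := by
    rw [← star_dotProduct_mul_mulVec, conjTranspose_conjTranspose]
  have h2 : vecNormSq (Rᴴ *ᵥ a) = vecNormSq (R *ᵥ a) := by
    apply Complex.ofReal_injective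
    rw [← star_dotProduct_self_eq, ← star_dotProduct_self_eq, ← star_dotProduct_mul_mulVec,
      ← star_dotProduct_mul_mulVec, conjTranspose_conjTranspose,
      resolvent_mul_conjTranspose_comm hA hR]
  have h3 := norm_star_dotProduct_le (Rᴴ *ᵥ a) (R *ᵥ a)
  rw [h1]
  linarith

/-- Trace form of block inversion for a bordered matrix: `d - b A⁻¹ c` is the Schur complement
of `A`. -/
theorem trace_inv_fromBlocks_sub {m : Type*} [Fintype m] [DecidableEq m] (A : Matrix m m ℂ)
    (hA : IsUnit A) (b c : m → ℂ) (d : ℂ) (hd : d - b ⬝ᵥ A⁻¹ *ᵥ c ≠ 0) :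
    (fromBlocks A (replicateCol Unit (-c)) (replicateRow Unit (-b)) (of fun _ _ => d))⁻¹.trace
      - A⁻¹.trace = (1 + b ⬝ᵥ (A⁻¹ * A⁻¹) *ᵥ c) / (d - b ⬝ᵥ A⁻¹ *ᵥ c) := by
  have hu := (isUnit_iff_isUnit_det _).1 hA
  set s := d - b ⬝ᵥ A⁻¹ *ᵥ c with hs
  have hinv : (fromBlocks A (replicateCol Unit (-c)) (replicateRow Unit (-b))
      (of fun _ _ => d))⁻¹ = fromBlocks (A⁻¹ + s⁻¹ • vecMulVec (A⁻¹ *ᵥ c) (b ᵥ* A⁻¹))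
        (replicateCol Unit (s⁻¹ • A⁻¹ *ᵥ c)) (replicateRow Unit (s⁻¹ • b ᵥ* A⁻¹))
        (of fun _ _ => s⁻¹) := by
    apply inv_eq_right_inv
    have hc : A *ᵥ (A⁻¹ *ᵥ c) = c := by rw [mulVec_mulVec, mul_nonsing_inv _ hu, one_mulVec]
    have hd' : d = s + b ⬝ᵥ A⁻¹ *ᵥ c := by rw [hs]; ring
    rw [fromBlocks_multiply, ← fromBlocks_one]
    congr 1
    · rw [mul_add, mul_nonsing_inv _ hu, mul_smul_comm, mul_vecMulVec, hc]
      ext i j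
      simp [mul_apply, vecMulVec_apply]
    · ext i j
      have h1 : (A * replicateCol Unit (s⁻¹ • A⁻¹ *ᵥ c)) i j = (A *ᵥ (s⁻¹ • A⁻¹ *ᵥ c)) i := rfl
      rw [Matrix.add_apply, h1, mulVec_smul, hc]
      simp [mul_apply]
      ring
    · ext i j
      have h1 : ((replicateRow Unit (-b)) * (A⁻¹ + s⁻¹ • vecMulVec (A⁻¹ *ᵥ c) (b ᵥ* A⁻¹))) i j
          = ((-b) ᵥ* (A⁻¹ + s⁻¹ • vecMulVec (A⁻¹ *ᵥ c) (b ᵥ* A⁻¹))) j := rfl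
      rw [Matrix.add_apply, h1, vecMul_add, vecMul_smul, vecMul_vecMulVec]
      simp [mul_apply, neg_vecMul, hd']
      field_simp
      ring
    · ext i j
      have h1 : ((replicateRow Unit (-b)) * (replicateCol Unit (s⁻¹ • A⁻¹ *ᵥ c))) i j
          = (-b) ⬝ᵥ (s⁻¹ • A⁻¹ *ᵥ c) := rfl
      rw [Matrix.add_apply, h1]
      simp [mul_apply, hd']
      field_simp
      ring
  have htr : ∀ (P : Matrix m m ℂ) (Q : Matrix m Unit ℂ) (S : Matrix Unit m ℂ)
      (T : Matrix Unit Unit ℂ), (fromBlocks P Q S T).trace = P.trace + T.trace :=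
    fun _ _ _ _ => Fintype.sum_sum_type _
  rw [hinv, htr, trace_add, trace_smul, trace_vecMulVec]
  have h2 : (A⁻¹ *ᵥ c) ⬝ᵥ (b ᵥ* A⁻¹) = b ⬝ᵥ (A⁻¹ * A⁻¹) *ᵥ c := by
    rw [dotProduct_comm, ← dotProduct_mulVec, mulVec_mulVec]
  rw [h2]
  simp [trace]
  field_simp
  ring

/-- Difference of traces of the resolvent of a Hermitian matrix and of the resolvent of the
principal submatrix obtained by deleting the `k`-th row and column: the Schur complement
identity and the bound `|Tr G − Tr G_k| ≤ π |Im z|⁻¹`. -/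
theorem trace_resolvent_sub_trace_minor (n : ℕ)
    (H : Matrix (Fin (n + 1)) (Fin (n + 1)) ℂ) (hH : H.IsHermitian)
    (z : ℂ) (hz : z.im ≠ 0) (k : Fin (n + 1))
    (G : Matrix (Fin (n + 1)) (Fin (n + 1)) ℂ)
    (hG : G = (z • (1 : Matrix (Fin (n + 1)) (Fin (n + 1)) ℂ) - H)⁻¹)
    (Gk : Matrix (Fin n) (Fin n) ℂ)
    (hGk : Gk = (z • (1 : Matrix (Fin n) (Fin n) ℂ) - H.submatrix k.succAbove k.succAbove)⁻¹)
    (a : Fin n → ℂ) (ha : a = fun i => H (k.succAbove i) k) :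
    z - H k k - star a ⬝ᵥ Gk.mulVec a ≠ 0 ∧
    G.trace - Gk.trace
      = (1 + star a ⬝ᵥ (Gk * Gk).mulVec a) / (z - H k k - star a ⬝ᵥ Gk.mulVec a) ∧
    ‖G.trace - Gk.trace‖ ≤ Real.pi * |z.im|⁻¹ := by
  set Hk := H.submatrix k.succAbove k.succAbove with hHk
  have hHkH : Hk.IsHermitian := hH.submatrix _
  have hnn := vecNormSq_nonneg (Gk *ᵥ a)
  have him : (z - H k k - star a ⬝ᵥ Gk *ᵥ a).im = z.im * (1 + vecNormSq (Gk *ᵥ a)) := by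
    have hkk : (H k k).im = 0 := Complex.conj_eq_iff_im.1 (hH.apply k k)
    rw [Complex.sub_im, Complex.sub_im, im_star_dotProduct_resolvent hHkH hz hGk, hkk]
    ring
  have hne : z - H k k - star a ⬝ᵥ Gk *ᵥ a ≠ 0 := by
    intro h
    rw [h, Complex.zero_im] at him
    exact mul_ne_zero hz (by positivity) him.symm
  have htr : G.trace - Gk.trace
      = (1 + star a ⬝ᵥ (Gk * Gk) *ᵥ a) / (z - H k k - star a ⬝ᵥ Gk *ᵥ a) := by
    -- `e` moves the index `k` to the last block, so that `z - H` becomes a bordered matrix.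
    let e : Fin n ⊕ Unit ≃ Fin (n + 1) :=
      ((finSuccEquiv' k).trans (Equiv.optionEquivSumPUnit (Fin n))).symm
    have el (i : Fin n) : e (Sum.inl i) = k.succAbove i := by simp [e]
    have er (i : Unit) : e (Sum.inr i) = k := by simp [e]
    have hblock : (z • (1 : Matrix (Fin (n + 1)) (Fin (n + 1)) ℂ) - H).submatrix e e
        = fromBlocks (z • (1 : Matrix (Fin n) (Fin n) ℂ) - Hk) (replicateCol Unit (-a))
          (replicateRow Unit (-star a)) (of fun _ _ => z - H k k) := by
      ext i j
      rcases i with i | i <;> rcases j with j | j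
      · simp [el, hHk, one_apply]
      · simp [el, er, ha, one_apply]
      · simp [el, er, ha, one_apply, (Fin.succAbove_ne k j).symm, (hH.apply k (k.succAbove j)).symm]
      · simp [er]
    have hGtr : G.trace = ((z • (1 : Matrix (Fin (n + 1)) (Fin (n + 1)) ℂ) - H).submatrix
        e e)⁻¹.trace := by
      rw [inv_submatrix_equiv, ← hG]
      exact (Equiv.sum_comp e fun i => G i i).symm
    rw [hGtr, hblock, hGk]
    exact trace_inv_fromBlocks_sub _ (isUnit_smul_one_sub hHkH hz) (star a) a _ (hGk ▸ hne)
  refine ⟨hne, htr, ?_⟩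
  have hnum : ‖1 + star a ⬝ᵥ (Gk * Gk) *ᵥ a‖ ≤ 1 + vecNormSq (Gk *ᵥ a) := by
    refine (norm_add_le _ _).trans ?_
    rw [norm_one]
    gcongr
    exact norm_star_dotProduct_resolvent_sq_le hHkH hGk a
  have hden : |z.im| * (1 + vecNormSq (Gk *ᵥ a)) ≤ ‖z - H k k - star a ⬝ᵥ Gk *ᵥ a‖ := by
    have h := Complex.abs_im_le_norm (z - H k k - star a ⬝ᵥ Gk *ᵥ a)
    rwa [him, abs_mul, abs_of_pos (by positivity : 0 < 1 + vecNormSq (Gk *ᵥ a))] at h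
  have hz' : 0 < |z.im| := abs_pos.2 hz
  have hle : ‖G.trace - Gk.trace‖ ≤ |z.im|⁻¹ := by
    rw [htr, norm_div, div_le_iff₀ (norm_pos_iff.2 hne), inv_mul_eq_div, le_div_iff₀ hz']
    nlinarith
  refine hle.trans (le_mul_of_one_le_left (by positivity) ?_)
  linarith [Real.pi_gt_three]
end
end

section
/- Let H be an N×N Hermitian matrix, z ∈ ℂ∖ℝ, and G = (z·I − H)^{-1}. Then for each j ∈ {1,…,N}: (i) Im z · Im G_{jj} < 0; (ii) |Im z| · |(G²)_{jj}| ≤ |Im G_{jj}| ≤ |Im z|^{-1}; and (iii) for any vector a = (a_1,…,a_N) ∈ ℂ^N, | (1 + Σ_{j=1}^N |a_j|² (G²)_{jj}) / (z − Σ_{j=1}^N |a_j|² G_{jj}) | ≤ 2 |Im z|^{-1} (in particular the denominator is nonzero). -/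
/-!
Write `A = z • 1 - H`, so that `G = A⁻¹` and `Aᴴ - A = (conj z - z) • 1`. Multiplying by `G` and `Gᴴ`
on either side gives the Ward identities `G - Gᴴ = (conj z - z) • (G * Gᴴ) = (conj z - z) • (Gᴴ * G)`.
On the diagonal these say that the `i`-th row and the `i`-th column of `G` have the same squared
norm `S i`, and that `Im G i i = - Im z * S i`. Every bound follows: `S i > 0` as `G` has no zero
row, `|(G * G) i i| ≤ S i` by the arithmetic-geometric mean inequality, and `|G i i| ^ 2 ≤ S i`
trivially. In the last part, the numerator is at most `1 + ∑ |a i| ^ 2 * S i`, while the imaginary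
part of the denominator is exactly `Im z * (1 + ∑ |a i| ^ 2 * S i)`; this even yields the constant
`1` in place of `2`.
-/

open MeasureTheory Matrix
noncomputable section

/-- The spectrum of a Hermitian matrix is real. -/
lemma isUnit_smul_one_sub_s12 {N : ℕ} {H : Matrix (Fin N) (Fin N) ℂ} (hH : H.IsHermitian)
    {z : ℂ} (hz : z.im ≠ 0) : IsUnit (z • (1 : Matrix (Fin N) (Fin N) ℂ) - H) := by
  by_contra h
  have hmem : z ∈ spectrum ℂ H := by
    rw [spectrum.mem_iff, Algebra.algebraMap_eq_smul_one]
    exact h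
  rw [hH.spectrum_eq_image_range] at hmem
  obtain ⟨x, -, rfl⟩ := hmem
  exact hz (Complex.ofReal_im x)

/-- The diagonal of the Ward identity `G - Gᴴ = (conj z - z) • (G * Gᴴ)`, in terms of the rows and
of the columns of `G`. -/
lemma resolvent_im_diag {N : ℕ} {H G : Matrix (Fin N) (Fin N) ℂ} (hH : H.IsHermitian) {z : ℂ}
    (h1 : G * (z • 1 - H) = 1) (h2 : (z • 1 - H) * G = 1) (i : Fin N) :
    (G i i).im = -z.im * ∑ k, ‖G i k‖ ^ 2 ∧ (G i i).im = -z.im * ∑ k, ‖G k i‖ ^ 2 := by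
  have h1' : (star z • 1 - H) * Gᴴ = 1 := by
    simpa [conjTranspose_mul, hH.eq] using congrArg conjTranspose h1
  have h2' : Gᴴ * (star z • 1 - H) = 1 := by
    simpa [conjTranspose_mul, hH.eq] using congrArg conjTranspose h2
  have hA : (star z • 1 - H) - (z • 1 - H) = (star z - z) • (1 : Matrix (Fin N) (Fin N) ℂ) := by
    rw [sub_smul]; abel
  have e1 : G - Gᴴ = (star z - z) • (G * Gᴴ) := by
    calc G - Gᴴ = G * ((star z • 1 - H) * Gᴴ) - (G * (z • 1 - H)) * Gᴴ := by
          rw [h1', h1, mul_one, one_mul]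
      _ = G * ((star z • 1 - H) - (z • 1 - H)) * Gᴴ := by noncomm_ring
      _ = _ := by rw [hA]; simp
  have e2 : G - Gᴴ = (star z - z) • (Gᴴ * G) := by
    calc G - Gᴴ = (Gᴴ * (star z • 1 - H)) * G - Gᴴ * ((z • 1 - H) * G) := by
          rw [h2', h2, mul_one, one_mul]
      _ = Gᴴ * ((star z • 1 - H) - (z • 1 - H)) * G := by noncomm_ring
      _ = _ := by rw [hA]; simp
  have d1 : (G * Gᴴ) i i = ((∑ k, ‖G i k‖ ^ 2 : ℝ) : ℂ) := by
    simp [mul_apply, Complex.mul_conj']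
  have d2 : (Gᴴ * G) i i = ((∑ k, ‖G k i‖ ^ 2 : ℝ) : ℂ) := by
    simp [mul_apply, Complex.conj_mul']
  have key : ∀ s : ℝ, G i i - star (G i i) = (star z - z) * (s : ℂ) →
      (G i i).im = -z.im * s := by
    intro s hs
    have := congrArg Complex.im hs
    simp at this
    linarith
  constructor
  · apply key
    rw [← d1]
    simpa using congrFun (congrFun e1 i) i
  · apply key
    rw [← d2]
    simpa using congrFun (congrFun e2 i) i

/-- Bounds on the diagonal entries of the resolvent `G = (z·I − H)⁻¹` of a Hermitian matrix:
(i) `Im z · Im G_{jj} < 0`; (ii) `|Im z|·|(G²)_{jj}| ≤ |Im G_{jj}| ≤ |Im z|⁻¹`;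
(iii) for every vector `a`, `|(1 + Σ |a_j|²(G²)_{jj})/(z − Σ |a_j|² G_{jj})| ≤ 2 |Im z|⁻¹`,
the denominator being nonzero. -/
theorem resolvent_diagonal_bounds (N : ℕ)
    (H : Matrix (Fin N) (Fin N) ℂ) (hH : H.IsHermitian)
    (z : ℂ) (hz : z.im ≠ 0)
    (G : Matrix (Fin N) (Fin N) ℂ)
    (hG : G = (z • (1 : Matrix (Fin N) (Fin N) ℂ) - H)⁻¹)
    (j : Fin N) :
    z.im * (G j j).im < 0 ∧
    |z.im| * ‖(G * G) j j‖ ≤ |(G j j).im| ∧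
    |(G j j).im| ≤ |z.im|⁻¹ ∧
    ∀ a : Fin N → ℂ,
      z - (∑ i, (‖a i‖ : ℂ) ^ 2 * G i i) ≠ 0 ∧
      ‖(1 + ∑ i, (‖a i‖ : ℂ) ^ 2 * (G * G) i i)
          / (z - ∑ i, (‖a i‖ : ℂ) ^ 2 * G i i)‖ ≤ 2 * |z.im|⁻¹ := by
  have hA := isUnit_smul_one_sub_s12 hH hz
  rw [Matrix.isUnit_iff_isUnit_det] at hA
  have h1 : G * (z • 1 - H) = 1 := by rw [hG]; exact nonsing_inv_mul _ hA
  have h2 : (z • 1 - H) * G = 1 := by rw [hG]; exact mul_nonsing_inv _ hA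
  clear hG hA
  obtain ⟨S, hS⟩ : ∃ S : Fin N → ℝ, ∀ i, 0 < S i ∧ (G i i).im = -z.im * S i ∧
      ‖(G * G) i i‖ ≤ S i ∧ ‖G i i‖ ^ 2 ≤ S i := by
    refine ⟨fun i => ∑ k, ‖G i k‖ ^ 2, fun i => ?_⟩
    obtain ⟨hr, hc⟩ := resolvent_im_diag hH h1 h2 i
    have hrc : ∑ k, ‖G i k‖ ^ 2 = ∑ k, ‖G k i‖ ^ 2 :=
      mul_left_cancel₀ (neg_ne_zero.mpr hz) (hr.symm.trans hc)
    refine ⟨?_, hr, ?_, ?_⟩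
    · refine lt_of_le_of_ne (by positivity) fun h0 => ?_
      have hrow : ∀ k, G i k = 0 := by
        intro k
        have := (Finset.sum_eq_zero_iff_of_nonneg (fun k _ => by positivity)).mp h0.symm k
          (Finset.mem_univ k)
        simpa using this
      have := congrFun (congrFun h1 i) i
      rw [mul_apply] at this
      simp [hrow] at this
    · have : ‖(G * G) i i‖ ≤ ∑ k, (‖G i k‖ ^ 2 + ‖G k i‖ ^ 2) / 2 := by
        rw [mul_apply]
        refine (norm_sum_le _ _).trans (Finset.sum_le_sum fun k _ => ?_)
        rw [norm_mul]
        linarith [two_mul_le_add_sq ‖G i k‖ ‖G k i‖]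
      rw [← Finset.sum_div, Finset.sum_add_distrib, ← hrc] at this
      linarith
    · exact Finset.single_le_sum (f := fun k => ‖G i k‖ ^ 2) (fun k _ => by positivity)
        (Finset.mem_univ i)
  have hz' : 0 < |z.im| := abs_pos.mpr hz
  obtain ⟨hpos, him, hsq, hdiag⟩ := hS j
  have habs : |(G j j).im| = |z.im| * S j := by
    rw [him, abs_mul, abs_neg, abs_of_pos hpos]
  refine ⟨?_, ?_, ?_, fun a => ?_⟩
  · rw [him]
    have : 0 < z.im ^ 2 * S j := by positivity
    linarith
  · rw [habs]
    gcongr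
  · have hm : |(G j j).im| ^ 2 ≤ S j :=
      (pow_le_pow_left₀ (abs_nonneg _) (Complex.abs_im_le_norm _) 2).trans hdiag
    -- With `m = |Im G j j| = |Im z| * S j`, the bound `m ^ 2 ≤ S j` reads `|Im z| * m ^ 2 ≤ m`.
    have hm0 : 0 < |(G j j).im| := by rw [habs]; positivity
    rw [← one_div, le_div_iff₀ hz']
    refine le_of_mul_le_mul_right ?_ hm0
    nlinarith [mul_le_mul_of_nonneg_left hm hz'.le]
  · set T : ℝ := 1 + ∑ i, ‖a i‖ ^ 2 * S i with hT
    have hTpos : 0 < T := by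
      have : 0 ≤ ∑ i, ‖a i‖ ^ 2 * S i :=
        Finset.sum_nonneg fun i _ => mul_nonneg (by positivity) (hS i).1.le
      linarith
    have hnum : ‖1 + ∑ i, (‖a i‖ : ℂ) ^ 2 * (G * G) i i‖ ≤ T := by
      refine (norm_add_le _ _).trans ?_
      rw [norm_one, hT]
      gcongr
      refine (norm_sum_le _ _).trans (Finset.sum_le_sum fun i _ => ?_)
      rw [norm_mul, norm_pow, Complex.norm_real, norm_norm]
      exact mul_le_mul_of_nonneg_left (hS i).2.2.1 (by positivity)
    have hden : (z - ∑ i, (‖a i‖ : ℂ) ^ 2 * G i i).im = z.im * T := by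
      have : ∀ i, ((‖a i‖ : ℂ) ^ 2 * G i i).im = -z.im * (‖a i‖ ^ 2 * S i) := by
        intro i
        rw [← Complex.ofReal_pow, Complex.im_ofReal_mul, (hS i).2.1]
        ring
      rw [Complex.sub_im, Complex.im_sum, Finset.sum_congr rfl fun i _ => this i,
        ← Finset.mul_sum, hT]
      ring
    have hlow : |z.im| * T ≤ ‖z - ∑ i, (‖a i‖ : ℂ) ^ 2 * G i i‖ := by
      have := Complex.abs_im_le_norm (z - ∑ i, (‖a i‖ : ℂ) ^ 2 * G i i)
      rwa [hden, abs_mul, abs_of_pos hTpos] at this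
    have hD : 0 < ‖z - ∑ i, (‖a i‖ : ℂ) ^ 2 * G i i‖ :=
      lt_of_lt_of_le (by positivity) hlow
    refine ⟨norm_pos_iff.mp hD, ?_⟩
    rw [norm_div, div_le_iff₀ hD]
    calc _ ≤ T := hnum
      _ ≤ 2 * |z.im|⁻¹ * (|z.im| * T) := by
        have : 2 * |z.im|⁻¹ * (|z.im| * T) = 2 * T := by field_simp
        linarith
      _ ≤ _ := by gcongr
end
end

section
/- Let A_1, A_2 be N×N Hermitian matrices, and let Ã_1, Ã_2 be the (N−1)×(N−1) matrices obtained from A_1 and A_2 respectively by removing the ℓ-th row and ℓ-th column, for some fixed ℓ ∈ {1,…,N}. Let z, z' ∈ ℂ and t, t' ∈ ℝ with t·Im z > 0 and t'·Im z' > 0, and set G = (z·I − A_1)^{-1}, G' = (z'·I − A_2)^{-1}, G̃ = (z·I − Ã_1)^{-1}, G̃' = (z'·I − Ã_2)^{-1}, and C = t/Im z + t'/Im z' (so C > 0). Then for any function f defined on B = { g ∈ ℂ : Im g ≤ 0, |g| ≤ C }, one has | (1/N) Σ_{k=1}^N f(t G_{kk} + t' G'_{kk}) − (1/N) Σ_{k=1}^{N−1}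 f(t G̃_{kk} + t' G̃'_{kk}) | ≤ C·‖f‖_Lip / N + ‖f‖_∞ / N, where ‖f‖_Lip = sup_{x≠y∈B} |f(y)−f(x)|/|y−x| and ‖f‖_∞ = sup_{x∈B} |f(x)|. -/
/-!
Let `G = (z - A)⁻¹` with `A` Hermitian and `z` non-real. The Ward identity
`Im G_{ℓℓ} = -Im z · ∑ⱼ |G_{ℓj}|²` (and its column version) drives everything. It puts the numbers
`t G_{kk} + t' G'_{kk}` in the half-disc `B`, since `|G_{kk}|² ≤ ∑ⱼ |G_{kj}|² ≤ |G_{kk}| / |Im z|`.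
It also shows that passing to the minor `Ã` changes the diagonal by little in total: by the Schur
complement formula `G_{kk} - G̃_{kk} = G_{kℓ} G_{ℓk} / G_{ℓℓ}`, so by `2ab ≤ a² + b²` and the
two Ward identities `∑_{k ≠ ℓ} |G_{kk} - G̃_{kk}| ≤ 1 / |Im z|` (`sum_diag_diff_le`).
The Lipschitz bound on `f` turns this into `C · Cl` for the indices `k ≠ ℓ`, and the unmatched
index `ℓ` costs at most the sup bound `Ci`.
-/

open MeasureTheory Matrix
noncomputable section

/-- `z - A` is invertible for Hermitian `A` and non-real `z`: a kernel vector `v ≠ 0` would give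
`z ‖v‖² = ⟨v, A v⟩ ∈ ℝ`. -/
lemma isUnit_det_smul_one_sub {ι : Type*} [Fintype ι] [DecidableEq ι] {A : Matrix ι ι ℂ}
    (hA : A.IsHermitian) {z : ℂ} (hz : z.im ≠ 0) :
    IsUnit (z • (1 : Matrix ι ι ℂ) - A).det := by
  rw [isUnit_iff_ne_zero]
  intro h
  obtain ⟨v, hv, h0⟩ := Matrix.exists_mulVec_eq_zero_iff.2 h
  have h1 : z • v = A *ᵥ v := by
    rw [Matrix.sub_mulVec, Matrix.smul_mulVec, Matrix.one_mulVec] at h0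
    exact sub_eq_zero.1 h0
  have h2 := hA.im_star_dotProduct_mulVec_self v
  rw [← h1, dotProduct_smul] at h2
  have h3 : star v ⬝ᵥ v = ((∑ i, ‖v i‖ ^ 2 : ℝ) : ℂ) := by
    simp [dotProduct, Complex.conj_mul']
  rw [h3] at h2
  simp only [smul_eq_mul, RCLike.im_eq_complex_im, Complex.im_mul_ofReal] at h2
  have h4 := (mul_eq_zero.1 h2).resolve_left hz
  apply hv
  ext i
  have := (Finset.sum_eq_zero_iff_of_nonneg (fun i _ => by positivity)).1 h4 i (Finset.mem_univ i)
  simpa using this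

/-- Ward identity for the rows of the resolvent, the diagonal of `G - Gᴴ = (z̄ - z) G Gᴴ`. -/
lemma ward_row {ι : Type*} [Fintype ι] [DecidableEq ι] {A G : Matrix ι ι ℂ}
    (hA : A.IsHermitian) {z : ℂ} (hG : G * (z • (1 : Matrix ι ι ℂ) - A) = 1) (k : ι) :
    (G k k).im = -z.im * ∑ j, ‖G k j‖ ^ 2 := by
  have h1 : (star z • (1 : Matrix ι ι ℂ) - A) * Gᴴ = 1 := by
    have := congrArg conjTranspose hG
    simpa [conjTranspose_mul, hA.eq] using this
  have h2 : G - Gᴴ = (star z - z) • (G * Gᴴ) := by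
    calc G - Gᴴ = G * ((star z • (1 : Matrix ι ι ℂ) - A) * Gᴴ)
          - G * (z • (1 : Matrix ι ι ℂ) - A) * Gᴴ := by rw [h1, hG, mul_one, one_mul]
      _ = (star z - z) • (G * Gᴴ) := by
        rw [Matrix.mul_assoc, ← Matrix.mul_sub, ← Matrix.sub_mul, sub_sub_sub_cancel_right,
          ← sub_smul, smul_mul_assoc, one_mul, mul_smul_comm]
  have h3 := congrArg Complex.im (congrFun (congrFun h2 k) k)
  have h4 : (G * Gᴴ) k k = ((∑ j, ‖G k j‖ ^ 2 : ℝ) : ℂ) := by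
    simp [Matrix.mul_apply, Complex.mul_conj']
  rw [Matrix.smul_apply, h4] at h3
  simp only [Matrix.sub_apply, conjTranspose_apply, smul_eq_mul, Complex.im_mul_ofReal,
    Complex.sub_im, RCLike.star_def, Complex.conj_im] at h3
  linarith

/-- Ward identity for the columns: the transpose of a resolvent of `A` is a resolvent of `Aᵀ`. -/
lemma ward_col {ι : Type*} [Fintype ι] [DecidableEq ι] {A G : Matrix ι ι ℂ}
    (hA : A.IsHermitian) {z : ℂ} (hG : (z • (1 : Matrix ι ι ℂ) - A) * G = 1) (k : ι) :
    (G k k).im = -z.im * ∑ j, ‖G j k‖ ^ 2 := by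
  have h : Gᵀ * (z • (1 : Matrix ι ι ℂ) - Aᵀ) = 1 := by
    have := congrArg transpose hG
    simpa [transpose_mul] using this
  exact ward_row hA.transpose h k

/-- If `0 < t * z.im`, then `t / z.im` is the product of `|t|` with the resolvent bound
`1 / |z.im|`. -/
lemma div_eq_abs_div_abs {t y : ℝ} (h : 0 < t * y) : t / y = |t| / |y| := by
  rw [← abs_div, abs_of_pos]
  have hy : y ≠ 0 := by rintro rfl; simp at h
  have : t / y = t * y / y ^ 2 := by field_simp
  rw [this]
  positivity

/-- The diagonal entries of `t • (z - A)⁻¹` lie in the closed lower half-disc of radius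
`t / z.im`. -/
lemma diag_mem {ι : Type*} [Fintype ι] [DecidableEq ι] {A : Matrix ι ι ℂ}
    (hA : A.IsHermitian) {z : ℂ} {t : ℝ} (h : 0 < t * z.im) (k : ι) :
    ((t : ℂ) * (z • (1 : Matrix ι ι ℂ) - A)⁻¹ k k).im ≤ 0 ∧
      ‖(t : ℂ) * (z • (1 : Matrix ι ι ℂ) - A)⁻¹ k k‖ ≤ t / z.im := by
  have hz : z.im ≠ 0 := by intro h0; simp [h0] at h
  have hw := ward_row hA (Matrix.nonsing_inv_mul _ (isUnit_det_smul_one_sub hA hz)) k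
  set G := (z • (1 : Matrix ι ι ℂ) - A)⁻¹
  constructor
  · rw [Complex.im_ofReal_mul, hw]
    have : 0 ≤ ∑ j, ‖G k j‖ ^ 2 := by positivity
    nlinarith
  · rw [div_eq_abs_div_abs h, norm_mul, Complex.norm_real, Real.norm_eq_abs, div_eq_mul_inv]
    gcongr
    have hy : 0 < |z.im| := abs_pos.2 hz
    rw [← one_div, le_div_iff₀ hy]
    by_contra! hlt
    have h1 : ‖G k k‖ ^ 2 ≤ ∑ j, ‖G k j‖ ^ 2 :=
      Finset.single_le_sum (f := fun j => ‖G k j‖ ^ 2) (fun _ _ => by positivity)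
        (Finset.mem_univ k)
    have h2 : |z.im| * ∑ j, ‖G k j‖ ^ 2 ≤ ‖G k k‖ := by
      have h3 := Complex.abs_im_le_norm (G k k)
      rwa [hw, abs_mul, abs_neg, abs_of_nonneg (by positivity : 0 ≤ ∑ j, ‖G k j‖ ^ 2)] at h3
    have h4 : 0 < ‖G k k‖ := by
      by_contra! h5
      nlinarith
    nlinarith

/-- Schur complement formula for the inverse of a minor: removing row and column `ℓ` from the
inverted matrix subtracts the rank-one term `G_{iℓ} G_{ℓj} / G_{ℓℓ}` from the inverse. -/
lemma minor_inv_apply {n : ℕ} {M G : Matrix (Fin (n + 1)) (Fin (n + 1)) ℂ} (hG : G * M = 1)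
    (ℓ : Fin (n + 1)) (h0 : G ℓ ℓ ≠ 0) (i j : Fin n) :
    (M.submatrix ℓ.succAbove ℓ.succAbove)⁻¹ i j =
      G (ℓ.succAbove i) (ℓ.succAbove j)
        - G (ℓ.succAbove i) ℓ * G ℓ (ℓ.succAbove j) / G ℓ ℓ := by
  have key : (Matrix.of fun i j : Fin n => G (ℓ.succAbove i) (ℓ.succAbove j)
      - G (ℓ.succAbove i) ℓ * G ℓ (ℓ.succAbove j) / G ℓ ℓ) *
      M.submatrix ℓ.succAbove ℓ.succAbove = 1 := by
    ext a b
    have e1 := congrFun (congrFun hG (ℓ.succAbove a)) (ℓ.succAbove b)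
    have e2 := congrFun (congrFun hG ℓ) (ℓ.succAbove b)
    rw [Matrix.mul_apply, Fin.sum_univ_succAbove _ ℓ] at e1 e2
    rw [Matrix.one_apply_ne (Fin.succAbove_ne ℓ b).symm] at e2
    have e3 : (1 : Matrix (Fin (n + 1)) (Fin (n + 1)) ℂ) (ℓ.succAbove a) (ℓ.succAbove b)
        = (1 : Matrix (Fin n) (Fin n) ℂ) a b := by
      simp [Matrix.one_apply]
    rw [e3] at e1
    rw [← e1, Matrix.mul_apply]
    have e4 : ∑ j, (G (ℓ.succAbove a) (ℓ.succAbove j)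
        - G (ℓ.succAbove a) ℓ * G ℓ (ℓ.succAbove j) / G ℓ ℓ)
          * M (ℓ.succAbove j) (ℓ.succAbove b)
        = ∑ j, G (ℓ.succAbove a) (ℓ.succAbove j) * M (ℓ.succAbove j) (ℓ.succAbove b)
          - G (ℓ.succAbove a) ℓ / G ℓ ℓ *
            ∑ j, G ℓ (ℓ.succAbove j) * M (ℓ.succAbove j) (ℓ.succAbove b) := by
      rw [Finset.mul_sum, ← Finset.sum_sub_distrib]
      exact Finset.sum_congr rfl fun j _ => by ring
    simp only [Matrix.of_apply, Matrix.submatrix_apply]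
    rw [e4, eq_neg_of_add_eq_zero_right e2]
    field_simp
    ring
  rw [Matrix.inv_eq_left_inv key, Matrix.of_apply]

/-- The total change of the diagonal of `t • (z - A)⁻¹` when row and column `ℓ` of `A` are
removed is at most `t / z.im`, whatever the size of `A`. -/
lemma sum_diag_diff_le {n : ℕ} {A : Matrix (Fin (n + 1)) (Fin (n + 1)) ℂ}
    (hA : A.IsHermitian) (ℓ : Fin (n + 1)) {z : ℂ} {t : ℝ} (h : 0 < t * z.im) :
    ∑ k : Fin n, ‖(t : ℂ) * (z • (1 : Matrix (Fin (n + 1)) (Fin (n + 1)) ℂ) - A)⁻¹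
        (ℓ.succAbove k) (ℓ.succAbove k)
      - (t : ℂ) * (z • (1 : Matrix (Fin n) (Fin n) ℂ)
        - A.submatrix ℓ.succAbove ℓ.succAbove)⁻¹ k k‖ ≤ t / z.im := by
  have hz : z.im ≠ 0 := by intro h0; simp [h0] at h
  have hu := isUnit_det_smul_one_sub hA hz
  have hsub : z • (1 : Matrix (Fin n) (Fin n) ℂ) - A.submatrix ℓ.succAbove ℓ.succAbove
      = (z • (1 : Matrix (Fin (n + 1)) (Fin (n + 1)) ℂ) - A).submatrix
        ℓ.succAbove ℓ.succAbove := by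
    ext i j
    simp [Matrix.one_apply]
  rw [hsub]
  have hGM := Matrix.nonsing_inv_mul _ hu
  have hr := ward_row hA hGM ℓ
  have hc := ward_col hA (Matrix.mul_nonsing_inv _ hu) ℓ
  have hS := minor_inv_apply hGM ℓ
  set G := (z • (1 : Matrix (Fin (n + 1)) (Fin (n + 1)) ℂ) - A)⁻¹
  clear_value G
  have h0 : G ℓ ℓ ≠ 0 := by
    -- Otherwise the Ward identity annihilates the whole row `ℓ` of the invertible matrix `G`.
    intro h0
    rw [h0, Complex.zero_im, eq_comm, mul_eq_zero] at hr
    have h1 := hr.resolve_left (neg_ne_zero.2 hz)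
    have h2 : ∀ j, G ℓ j = 0 := fun j => by
      simpa using (Finset.sum_eq_zero_iff_of_nonneg (fun i _ => by positivity)).1 h1 j
        (Finset.mem_univ j)
    have h3 := congrFun (congrFun hGM ℓ) ℓ
    simp [Matrix.mul_apply, h2] at h3
  have hg : 0 < ‖G ℓ ℓ‖ := norm_pos_iff.2 h0
  have hy : 0 < |z.im| := abs_pos.2 hz
  have hr' : ∑ j, ‖G ℓ j‖ ^ 2 ≤ ‖G ℓ ℓ‖ / |z.im| := by
    have h3 := Complex.abs_im_le_norm (G ℓ ℓ)
    rw [hr, abs_mul, abs_neg, abs_of_nonneg (Finset.sum_nonneg fun j _ => sq_nonneg ‖G ℓ j‖)] at h3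
    rw [le_div_iff₀ hy]; linarith
  have hc' : ∑ j, ‖G j ℓ‖ ^ 2 ≤ ‖G ℓ ℓ‖ / |z.im| := by
    have h3 := Complex.abs_im_le_norm (G ℓ ℓ)
    rw [hc, abs_mul, abs_neg, abs_of_nonneg (Finset.sum_nonneg fun j _ => sq_nonneg ‖G j ℓ‖)] at h3
    rw [le_div_iff₀ hy]; linarith
  rw [Fin.sum_univ_succAbove _ ℓ] at hr' hc'
  have hb : ∑ k : Fin n, ‖G (ℓ.succAbove k) ℓ‖ * ‖G ℓ (ℓ.succAbove k)‖
      ≤ ‖G ℓ ℓ‖ / |z.im| := by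
    have h4 : ∑ k : Fin n, ‖G (ℓ.succAbove k) ℓ‖ * ‖G ℓ (ℓ.succAbove k)‖
        ≤ ∑ k : Fin n, (‖G (ℓ.succAbove k) ℓ‖ ^ 2 + ‖G ℓ (ℓ.succAbove k)‖ ^ 2) / 2 :=
      Finset.sum_le_sum fun k _ => by
        nlinarith [sq_nonneg (‖G (ℓ.succAbove k) ℓ‖ - ‖G ℓ (ℓ.succAbove k)‖)]
    rw [← Finset.sum_div, Finset.sum_add_distrib] at h4
    nlinarith [sq_nonneg ‖G ℓ ℓ‖]
  calc _ = ∑ k : Fin n, |t| / ‖G ℓ ℓ‖ * (‖G (ℓ.succAbove k) ℓ‖ * ‖G ℓ (ℓ.succAbove k)‖) :=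
        Finset.sum_congr rfl fun k _ => by
          rw [hS h0 k k, ← mul_sub, sub_sub_cancel, norm_mul, norm_div, norm_mul,
            Complex.norm_real, Real.norm_eq_abs]
          ring
    _ ≤ |t| / ‖G ℓ ℓ‖ * (‖G ℓ ℓ‖ / |z.im|) := by
        rw [← Finset.mul_sum]
        gcongr
    _ = t / z.im := by
        rw [div_eq_abs_div_abs h]
        field_simp

/-- Comparison of normalized sums of a function of the diagonal entries of resolvents of two
Hermitian matrices and of their principal submatrices (deleting the `ℓ`-th row and column):
if `f` is `Cl`-Lipschitz and bounded by `Ci` on `B = {g : Im g ≤ 0, |g| ≤ C}` with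
`C = t/Im z + t'/Im z'`, then the difference is at most `C·Cl/N + Ci/N` (here `N = n+1`). -/
theorem resolvent_diag_sum_minor_comparison (n : ℕ)
    (A₁ A₂ : Matrix (Fin (n + 1)) (Fin (n + 1)) ℂ)
    (hA₁ : A₁.IsHermitian) (hA₂ : A₂.IsHermitian) (ℓ : Fin (n + 1))
    (z z' : ℂ) (t t' : ℝ) (hz : 0 < t * z.im) (hz' : 0 < t' * z'.im)
    (G G' : Matrix (Fin (n + 1)) (Fin (n + 1)) ℂ)
    (Gt Gt' : Matrix (Fin n) (Fin n) ℂ)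
    (hG : G = (z • (1 : Matrix (Fin (n + 1)) (Fin (n + 1)) ℂ) - A₁)⁻¹)
    (hG' : G' = (z' • (1 : Matrix (Fin (n + 1)) (Fin (n + 1)) ℂ) - A₂)⁻¹)
    (hGt : Gt = (z • (1 : Matrix (Fin n) (Fin n) ℂ) - A₁.submatrix ℓ.succAbove ℓ.succAbove)⁻¹)
    (hGt' : Gt' = (z' • (1 : Matrix (Fin n) (Fin n) ℂ) - A₂.submatrix ℓ.succAbove ℓ.succAbove)⁻¹)
    (C : ℝ) (hC : C = t / z.im + t' / z'.im)
    (f : ℂ → ℂ) (Cl Ci : ℝ)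
    (hLip : ∀ x y : ℂ, x.im ≤ 0 → ‖x‖ ≤ C → y.im ≤ 0 → ‖y‖ ≤ C →
      ‖f x - f y‖ ≤ Cl * ‖x - y‖)
    (hBdd : ∀ x : ℂ, x.im ≤ 0 → ‖x‖ ≤ C → ‖f x‖ ≤ Ci) :
    ‖((n + 1 : ℂ))⁻¹ * (∑ k : Fin (n + 1), f ((t : ℂ) * G k k + (t' : ℂ) * G' k k))
        - ((n + 1 : ℂ))⁻¹ * (∑ k : Fin n, f ((t : ℂ) * Gt k k + (t' : ℂ) * Gt' k k))‖
      ≤ C * Cl / (n + 1) + Ci / (n + 1) := by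
  subst hG hG' hGt hGt'
  have hm : ∀ {x y : ℂ}, x.im ≤ 0 ∧ ‖x‖ ≤ t / z.im → y.im ≤ 0 ∧ ‖y‖ ≤ t' / z'.im →
      (x + y).im ≤ 0 ∧ ‖x + y‖ ≤ C := fun {x y} hx hy => by
    refine ⟨by rw [Complex.add_im]; linarith, (norm_add_le x y).trans ?_⟩
    linarith [hx.2, hy.2]
  have hB := fun k => hm (diag_mem hA₁ hz k) (diag_mem hA₂ hz' k)
  have hBt := fun k => hm (diag_mem (hA₁.submatrix ℓ.succAbove) hz k)
    (diag_mem (hA₂.submatrix ℓ.succAbove) hz' k)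
  have hs₁ := sum_diag_diff_le hA₁ ℓ hz
  have hs₂ := sum_diag_diff_le hA₂ ℓ hz'
  set G := (z • (1 : Matrix (Fin (n + 1)) (Fin (n + 1)) ℂ) - A₁)⁻¹
  set G' := (z' • (1 : Matrix (Fin (n + 1)) (Fin (n + 1)) ℂ) - A₂)⁻¹
  set Gt := (z • (1 : Matrix (Fin n) (Fin n) ℂ) - A₁.submatrix ℓ.succAbove ℓ.succAbove)⁻¹
  set Gt' := (z' • (1 : Matrix (Fin n) (Fin n) ℂ) - A₂.submatrix ℓ.succAbove ℓ.succAbove)⁻¹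
  have hCpos : 0 < C := by
    have hpos : ∀ {s y : ℝ}, 0 < s * y → 0 < s / y := fun {s y} h => by
      rw [div_eq_abs_div_abs h]
      have hs : s ≠ 0 := by rintro rfl; simp at h
      have hy : y ≠ 0 := by rintro rfl; simp at h
      positivity
    rw [hC]
    exact add_pos (hpos hz) (hpos hz')
  -- `B` contains the two distinct points `C` and `0`, so a Lipschitz constant on it is nonnegative.
  have hCl : 0 ≤ Cl := by
    have h1 := (norm_nonneg _).trans (hLip C 0 (by simp) (by simp [abs_of_pos hCpos])
      (by simp) (by simpa using hCpos.le))
    rw [sub_zero, Complex.norm_real, Real.norm_eq_abs, abs_of_pos hCpos] at h1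
    exact nonneg_of_mul_nonneg_left h1 hCpos
  rw [← mul_sub, norm_mul, Fin.sum_univ_succAbove _ ℓ, add_sub_assoc, ← Finset.sum_sub_distrib,
    ← add_div, norm_inv]
  have hN : ‖(n + 1 : ℂ)‖ = (n + 1 : ℝ) := by
    exact_mod_cast Complex.norm_natCast (n + 1)
  rw [hN, inv_mul_eq_div]
  gcongr
  have hsum : ∑ k : Fin n, ‖f (t * G (ℓ.succAbove k) (ℓ.succAbove k)
        + t' * G' (ℓ.succAbove k) (ℓ.succAbove k)) - f (t * Gt k k + t' * Gt' k k)‖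
      ≤ Cl * C := by
    calc _ ≤ ∑ k : Fin n, Cl * (‖t * G (ℓ.succAbove k) (ℓ.succAbove k) - t * Gt k k‖
          + ‖t' * G' (ℓ.succAbove k) (ℓ.succAbove k) - t' * Gt' k k‖) := by
          refine Finset.sum_le_sum fun k _ => (hLip _ _ (hB _).1 (hB _).2
            (hBt k).1 (hBt k).2).trans ?_
          rw [add_sub_add_comm]
          gcongr
          exact norm_add_le _ _
      _ ≤ Cl * C := by
          rw [← Finset.mul_sum, Finset.sum_add_distrib, hC]
          gcongr
  refine (norm_add_le _ _).trans ?_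
  have h1 := hBdd _ (hB ℓ).1 (hB ℓ).2
  have h2 := (norm_sum_le Finset.univ _).trans hsum
  linarith
end
end

section
/- Let g : (0,∞) → ℂ be measurable and satisfy |g(y)| ≤ K y^γ for 0 < y ≤ 1 and |g(y)| ≤ K y^κ for y ≥ 1, for some constants K > 0, γ > −1, κ ≥ 0. Suppose ρ and ρ̃ are functions from ℂ⁺ × (0,∞) to ℂ, written (z,λ) ↦ ρ_z(λ), each analytic in z ∈ ℂ⁺ = {Im z > 0} for every fixed λ, continuous in λ for every fixed z, with Re ρ_z(λ) ≤ 0 and Re ρ̃_z(λ) ≤ 0 everywhere, and both satisfying the fixed point equation ρ_z(λ) = λ ∫_0^∞ g(λy) e^{iyz + ρ_z(y)} dy for all z ∈ ℂ⁺ and all λ > 0. Then ρ = ρ̃. -/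
open MeasureTheory Complex Set
noncomputable section

/-!
For fixed `z` with large imaginary part `η`, the fixed point map is a contraction in a weighted
sup norm. Put `v y = y ^ γ + y ^ κ`; then `‖g y‖ ≤ K v y` and `v (λ y) ≤ v λ * v y`. Since
`‖exp a - exp b‖ ≤ ‖a - b‖` on the half-plane `Re ≤ 0`, a bound
`‖ρ_z(y) - ρ'_z(y)‖ ≤ M y v(y)` for all `y > 0` improves to
`‖ρ_z(λ) - ρ'_z(λ)‖ ≤ M λ v(λ) · K ∫ y v(y)² e^{-η y} dy` (`norm_sub_le_of_exp_sub_le`). The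
integral is finite because `1 + 2γ > -1`, and it tends to `0` as `η → ∞`
(`eventually_contraction_const`). Some initial `M` exists because `‖exp a - exp b‖ ≤ 2`. Iterating
gives `ρ_z = ρ'_z` once `Im z` is large, and the identity theorem on the upper half-plane
extends the equality to every `z`.
-/

/-- The weight `y ^ γ + y ^ κ`, which dominates `y ^ γ` near `0` and `y ^ κ` near `∞` at once. -/
def growthWeight (γ κ y : ℝ) : ℝ := y ^ γ + y ^ κ

lemma growthWeight_nonneg (γ κ : ℝ) {y : ℝ} (hy : 0 < y) : 0 ≤ growthWeight γ κ y := by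
  unfold growthWeight; positivity

lemma growthWeight_mul_le (γ κ : ℝ) {x y : ℝ} (hx : 0 < x) (hy : 0 < y) :
    growthWeight γ κ (x * y) ≤ growthWeight γ κ x * growthWeight γ κ y := by
  unfold growthWeight
  rw [Real.mul_rpow hx.le hy.le, Real.mul_rpow hx.le hy.le]
  have h1 : 0 ≤ x ^ γ * y ^ κ := by positivity
  have h2 : 0 ≤ x ^ κ * y ^ γ := by positivity
  nlinarith

lemma norm_le_growthWeight {g : ℝ → ℂ} {K γ κ : ℝ} (hK : 0 < K)
    (hg1 : ∀ y : ℝ, 0 < y → y ≤ 1 → ‖g y‖ ≤ K * y ^ γ)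
    (hg2 : ∀ y : ℝ, 1 ≤ y → ‖g y‖ ≤ K * y ^ κ) {y : ℝ} (hy : 0 < y) :
    ‖g y‖ ≤ K * growthWeight γ κ y := by
  unfold growthWeight
  have h1 : 0 ≤ K * y ^ γ := by positivity
  have h2 : 0 ≤ K * y ^ κ := by positivity
  rcases le_total y 1 with h | h
  · have := hg1 y hy h; linarith
  · have := hg2 y h; linarith

lemma integrableOn_rpow_mul_exp {s η : ℝ} (hs : -1 < s) (hη : 0 < η) :
    IntegrableOn (fun y : ℝ => y ^ s * Real.exp (-η * y)) (Ioi 0) := by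
  have := integrableOn_rpow_mul_exp_neg_mul_rpow (p := 1) hs one_pos hη
  simpa using this

lemma integrableOn_growthWeight {γ κ η : ℝ} (hγ : -1 < γ) (hκ : -1 < κ) (hη : 0 < η) :
    IntegrableOn (fun y : ℝ => growthWeight γ κ y * Real.exp (-η * y)) (Ioi 0) := by
  have := (integrableOn_rpow_mul_exp hγ hη).add (integrableOn_rpow_mul_exp hκ hη)
  refine this.congr_fun (fun y _ => ?_) measurableSet_Ioi
  simp only [growthWeight, Pi.add_apply]; ring

lemma integrableOn_growthWeight_sq {γ κ η : ℝ} (hγ : -1 < γ) (hκ : -1 < κ) (hη : 0 < η) :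
    IntegrableOn (fun y : ℝ => y * growthWeight γ κ y ^ 2 * Real.exp (-η * y)) (Ioi 0) := by
  have h1 := integrableOn_rpow_mul_exp (s := 1 + (γ + γ)) (by linarith) hη
  have h2 := integrableOn_rpow_mul_exp (s := 1 + (γ + κ)) (by linarith) hη
  have h3 := integrableOn_rpow_mul_exp (s := 1 + (κ + κ)) (by linarith) hη
  refine ((h1.add (h2.const_mul 2)).add h3).congr_fun (fun y hy => ?_) measurableSet_Ioi
  have hy : 0 < y := hy
  simp only [growthWeight, Pi.add_apply, Real.rpow_add hy, Real.rpow_one]; ring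

lemma eventually_contraction_const {γ κ : ℝ} (hγ : -1 < γ) (hκ : -1 < κ) (K : ℝ) :
    ∀ᶠ η : ℝ in Filter.atTop,
      K * ∫ y in Ioi (0 : ℝ), y * growthWeight γ κ y ^ 2 * Real.exp (-η * y) ≤ 1 / 2 := by
  have hlim : Filter.Tendsto
      (fun η : ℝ => ∫ y in Ioi (0 : ℝ), y * growthWeight γ κ y ^ 2 * Real.exp (-η * y))
      Filter.atTop (nhds (∫ _ in Ioi (0 : ℝ), (0 : ℝ))) := by
    refine tendsto_integral_filter_of_dominated_convergence
      (fun y => y * growthWeight γ κ y ^ 2 * Real.exp (-1 * y)) ?_ ?_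
      (integrableOn_growthWeight_sq hγ hκ one_pos) ?_
    · filter_upwards [Filter.eventually_gt_atTop 0] with η hη
      exact (integrableOn_growthWeight_sq hγ hκ hη).aestronglyMeasurable
    · filter_upwards [Filter.eventually_ge_atTop 1] with η hη
      filter_upwards [ae_restrict_mem measurableSet_Ioi] with y hy
      have hy : 0 < y := hy
      rw [Real.norm_of_nonneg (by positivity)]
      gcongr
    · filter_upwards [ae_restrict_mem measurableSet_Ioi] with y hy
      have hy : 0 < y := hy
      have h1 : Filter.Tendsto (fun η : ℝ => -η * y) Filter.atTop Filter.atBot :=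
        Filter.tendsto_neg_atTop_atBot.atBot_mul_const hy
      simpa using (Real.tendsto_exp_atBot.comp h1).const_mul (y * growthWeight γ κ y ^ 2)
  have h2 := hlim.const_mul K
  simp only [integral_zero, mul_zero] at h2
  exact h2.eventually_le_const (by norm_num)

lemma norm_exp_sub_exp_le_s18 {a b : ℂ} (ha : a.re ≤ 0) (hb : b.re ≤ 0) :
    ‖Complex.exp a - Complex.exp b‖ ≤ ‖a - b‖ := by
  have := (convex_halfSpace_re_le (0 : ℝ)).norm_image_sub_le_of_norm_deriv_le
    (f := Complex.exp) (C := 1) (fun x _ => Complex.differentiableAt_exp)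
    (fun x hx => by
      rw [Complex.deriv_exp, Complex.norm_exp]
      exact Real.exp_le_one_iff.2 hx) hb ha
  simpa using this

lemma integrableOn_fixed_point_integrand {g : ℝ → ℂ} {K γ κ : ℝ}
    (hγ : -1 < γ) (hκ : -1 < κ) (hgmeas : Measurable g)
    (hg : ∀ y : ℝ, 0 < y → ‖g y‖ ≤ K * growthWeight γ κ y) (hK : 0 < K)
    {z : ℂ} (hz : 0 < z.im) {r : ℝ → ℂ} (hr : ContinuousOn r (Ioi 0))
    (hre : ∀ y : ℝ, 0 < y → (r y).re ≤ 0) {lam : ℝ} (hlam : 0 < lam) :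
    IntegrableOn (fun y : ℝ => g (lam * y) * Complex.exp (Complex.I * y * z + r y)) (Ioi 0) := by
  refine Integrable.mono'
    ((integrableOn_growthWeight hγ hκ hz).const_mul (K * growthWeight γ κ lam)) ?_ ?_
  · refine AEStronglyMeasurable.mul
      (hgmeas.comp (measurable_const_mul lam)).aestronglyMeasurable ?_
    refine ContinuousOn.aestronglyMeasurable ?_ measurableSet_Ioi
    fun_prop
  · filter_upwards [ae_restrict_mem measurableSet_Ioi] with y hy
    have hy : 0 < y := hy
    rw [norm_mul, Complex.norm_exp]
    have h1 := hg (lam * y) (by positivity)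
    have h2 := growthWeight_mul_le γ κ hlam hy
    have h3 : ‖g (lam * y)‖ ≤ K * (growthWeight γ κ lam * growthWeight γ κ y) :=
      h1.trans (by gcongr)
    have h4 : (Complex.I * y * z + r y).re ≤ -z.im * y := by
      have := hre y hy
      simp
      linarith
    calc _ ≤ K * (growthWeight γ κ lam * growthWeight γ κ y) * Real.exp (-z.im * y) := by
          gcongr
          exact (norm_nonneg _).trans h3
      _ = _ := by ring

/-- One step of the iteration: a pointwise bound `B` on `exp r - exp r'` controls the distance
between the images of `r` and `r'` under the fixed point map. -/
lemma norm_sub_le_of_exp_sub_le {g : ℝ → ℂ} {K γ κ : ℝ}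
    (hγ : -1 < γ) (hκ : -1 < κ) (hgmeas : Measurable g)
    (hg : ∀ y : ℝ, 0 < y → ‖g y‖ ≤ K * growthWeight γ κ y) (hK : 0 < K)
    {z : ℂ} (hz : 0 < z.im) {r r' : ℝ → ℂ}
    (hr : ContinuousOn r (Ioi 0)) (hr' : ContinuousOn r' (Ioi 0))
    (hre : ∀ y : ℝ, 0 < y → (r y).re ≤ 0) (hre' : ∀ y : ℝ, 0 < y → (r' y).re ≤ 0)
    {B : ℝ → ℝ} (hB : ∀ y : ℝ, 0 < y → ‖Complex.exp (r y) - Complex.exp (r' y)‖ ≤ B y)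
    (hBint : IntegrableOn
      (fun y : ℝ => growthWeight γ κ y * B y * Real.exp (-z.im * y)) (Ioi 0))
    {lam : ℝ} (hlam : 0 < lam) :
    ‖(lam : ℂ) * (∫ y in Ioi (0 : ℝ), g (lam * y) * Complex.exp (Complex.I * y * z + r y))
      - (lam : ℂ) * ∫ y in Ioi (0 : ℝ), g (lam * y) * Complex.exp (Complex.I * y * z + r' y)‖
      ≤ lam * growthWeight γ κ lam *
        (K * ∫ y in Ioi (0 : ℝ), growthWeight γ κ y * B y * Real.exp (-z.im * y)) := by
  rw [← mul_sub, ← integral_sub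
    (integrableOn_fixed_point_integrand hγ hκ hgmeas hg hK hz hr hre hlam)
    (integrableOn_fixed_point_integrand hγ hκ hgmeas hg hK hz hr' hre' hlam),
    norm_mul, Complex.norm_real, Real.norm_of_nonneg hlam.le]
  have key := norm_integral_le_of_norm_le
    (f := fun y : ℝ => g (lam * y) * Complex.exp (Complex.I * y * z + r y)
      - g (lam * y) * Complex.exp (Complex.I * y * z + r' y))
    (hBint.const_mul (K * growthWeight γ κ lam)) (by
      filter_upwards [ae_restrict_mem measurableSet_Ioi] with y hy
      have hy : 0 < y := hy
      have h1 := hg (lam * y) (by positivity)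
      have h2 := growthWeight_mul_le γ κ hlam hy
      have h3 : ‖g (lam * y)‖ ≤ K * (growthWeight γ κ lam * growthWeight γ κ y) :=
        h1.trans (by gcongr)
      have h4 : (Complex.I * y * z).re = -z.im * y := by
        simp; ring
      rw [Complex.exp_add, Complex.exp_add, ← mul_sub, ← mul_sub, norm_mul, norm_mul,
        Complex.norm_exp, h4]
      calc _ ≤ K * (growthWeight γ κ lam * growthWeight γ κ y)
              * (Real.exp (-z.im * y) * B y) := by
            gcongr
            · exact (norm_nonneg _).trans h3
            · exact hB y hy
        _ = _ := by ring)
  rw [integral_const_mul] at key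
  calc _ ≤ lam * _ := mul_le_mul_of_nonneg_left key hlam.le
    _ = _ := by ring

/-- Uniqueness of the solution of the fixed point equation
`ρ_z(λ) = λ ∫_0^∞ g(λy) e^{iyz + ρ_z(y)} dy` among functions on `ℂ⁺ × (0,∞)` that are
analytic in `z`, continuous in `λ`, and have nonpositive real part, when `g` satisfies
the growth bounds `|g(y)| ≤ K y^γ` for `y ≤ 1` and `|g(y)| ≤ K y^κ` for `y ≥ 1`. -/
theorem fixed_point_rho_unique (g : ℝ → ℂ) (K γ κ : ℝ)
    (hK : 0 < K) (hγ : -1 < γ) (hκ : 0 ≤ κ) (hgmeas : Measurable g)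
    (hg1 : ∀ y : ℝ, 0 < y → y ≤ 1 → ‖g y‖ ≤ K * y ^ γ)
    (hg2 : ∀ y : ℝ, 1 ≤ y → ‖g y‖ ≤ K * y ^ κ)
    (ρ ρ' : ℂ → ℝ → ℂ)
    (hana : ∀ lam : ℝ, 0 < lam → DifferentiableOn ℂ (fun z => ρ z lam) {z : ℂ | 0 < z.im})
    (hana' : ∀ lam : ℝ, 0 < lam → DifferentiableOn ℂ (fun z => ρ' z lam) {z : ℂ | 0 < z.im})
    (hcont : ∀ z : ℂ, 0 < z.im → ContinuousOn (fun lam => ρ z lam) (Ioi (0 : ℝ)))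
    (hcont' : ∀ z : ℂ, 0 < z.im → ContinuousOn (fun lam => ρ' z lam) (Ioi (0 : ℝ)))
    (hre : ∀ (z : ℂ) (lam : ℝ), 0 < z.im → 0 < lam → (ρ z lam).re ≤ 0)
    (hre' : ∀ (z : ℂ) (lam : ℝ), 0 < z.im → 0 < lam → (ρ' z lam).re ≤ 0)
    (hfix : ∀ (z : ℂ) (lam : ℝ), 0 < z.im → 0 < lam →
      ρ z lam = (lam : ℂ) * ∫ y in Ioi (0 : ℝ),
        g (lam * y) * Complex.exp (Complex.I * y * z + ρ z y))
    (hfix' : ∀ (z : ℂ) (lam : ℝ), 0 < z.im → 0 < lam →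
      ρ' z lam = (lam : ℂ) * ∫ y in Ioi (0 : ℝ),
        g (lam * y) * Complex.exp (Complex.I * y * z + ρ' z y)) :
    ∀ (z : ℂ) (lam : ℝ), 0 < z.im → 0 < lam → ρ z lam = ρ' z lam := by
  have hκ' : -1 < κ := by linarith
  have hg : ∀ y : ℝ, 0 < y → ‖g y‖ ≤ K * growthWeight γ κ y :=
    fun y hy => norm_le_growthWeight hK hg1 hg2 hy
  obtain ⟨η₀, hη₀⟩ := Filter.eventually_atTop.1 (eventually_contraction_const hγ hκ' K)
  have large : ∀ z : ℂ, 0 < z.im → η₀ ≤ z.im → ∀ lam : ℝ, 0 < lam → ρ z lam = ρ' z lam := by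
    intro z hz hzη
    set M : ℝ := K * ∫ y in Ioi (0 : ℝ), growthWeight γ κ y * 2 * Real.exp (-z.im * y) with hM
    have hM0 : 0 ≤ M := by
      refine mul_nonneg hK.le (setIntegral_nonneg measurableSet_Ioi fun y hy => ?_)
      have := growthWeight_nonneg γ κ hy
      positivity
    have iter : ∀ n : ℕ, ∀ lam : ℝ, 0 < lam →
        ‖ρ z lam - ρ' z lam‖ ≤ M * (1 / 2) ^ n * (lam * growthWeight γ κ lam) := by
      intro n
      induction n with
      | zero =>
        intro lam hlam
        rw [hfix z lam hz hlam, hfix' z lam hz hlam]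
        refine (norm_sub_le_of_exp_sub_le hγ hκ' hgmeas hg hK hz (hcont z hz) (hcont' z hz)
          (fun y hy => hre z y hz hy) (fun y hy => hre' z y hz hy) (B := fun _ => 2)
          (fun y hy => ?_) ?_ hlam).trans_eq ?_
        · refine (norm_sub_le _ _).trans ?_
          rw [Complex.norm_exp, Complex.norm_exp]
          have h1 := Real.exp_le_one_iff.2 (hre z y hz hy)
          have h2 := Real.exp_le_one_iff.2 (hre' z y hz hy)
          linarith
        · refine IntegrableOn.congr_fun ((integrableOn_growthWeight hγ hκ' hz).const_mul 2)
            (fun y _ => ?_) measurableSet_Ioi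
          ring
        · rw [← hM]; ring
      | succ n ih =>
        intro lam hlam
        rw [hfix z lam hz hlam, hfix' z lam hz hlam]
        have heq : ∀ y : ℝ, growthWeight γ κ y * (M * (1 / 2) ^ n * (y * growthWeight γ κ y))
            * Real.exp (-z.im * y) =
            M * (1 / 2) ^ n * (y * growthWeight γ κ y ^ 2 * Real.exp (-z.im * y)) :=
          fun y => by ring
        refine (norm_sub_le_of_exp_sub_le hγ hκ' hgmeas hg hK hz (hcont z hz) (hcont' z hz)
          (fun y hy => hre z y hz hy) (fun y hy => hre' z y hz hy)
          (B := fun y => M * (1 / 2) ^ n * (y * growthWeight γ κ y))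
          (fun y hy => ?_) ?_ hlam).trans ?_
        · exact (norm_exp_sub_exp_le_s18 (hre z y hz hy) (hre' z y hz hy)).trans (ih y hy)
        · simp only [heq]
          exact (integrableOn_growthWeight_sq hγ hκ' hz).const_mul _
        · simp only [heq]
          rw [integral_const_mul]
          have hw := growthWeight_nonneg γ κ hlam
          calc _ = M * (1 / 2) ^ n * (lam * growthWeight γ κ lam) * (K * ∫ y in Ioi (0 : ℝ),
                  y * growthWeight γ κ y ^ 2 * Real.exp (-z.im * y)) := by ring
            _ ≤ M * (1 / 2) ^ n * (lam * growthWeight γ κ lam) * (1 / 2) := by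
                gcongr
                exact hη₀ _ hzη
            _ = _ := by ring
    intro lam hlam
    have hlim : Filter.Tendsto
        (fun n : ℕ => M * (1 / 2 : ℝ) ^ n * (lam * growthWeight γ κ lam))
        Filter.atTop (nhds 0) := by
      have := ((tendsto_pow_atTop_nhds_zero_of_lt_one (r := (1 / 2 : ℝ)) (by norm_num)
        (by norm_num)).const_mul M).mul_const (lam * growthWeight γ κ lam)
      simpa using this
    have h0 : ‖ρ z lam - ρ' z lam‖ ≤ 0 := ge_of_tendsto' hlim fun n => iter n lam hlam
    exact sub_eq_zero.1 (norm_le_zero_iff.1 h0)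
  intro z lam hz hlam
  have hopen : IsOpen {z : ℂ | 0 < z.im} := isOpen_lt continuous_const Complex.continuous_im
  -- A base point for the identity theorem whose neighbourhood lies in `{Im > max η₀ 0}`.
  let z₀ : ℂ := ⟨0, max η₀ 0 + 1⟩
  have hz₀ : max η₀ 0 < z₀.im := lt_add_one (max η₀ 0)
  refine AnalyticOnNhd.eqOn_of_preconnected_of_eventuallyEq (z₀ := z₀)
    ((hana lam hlam).analyticOnNhd hopen) ((hana' lam hlam).analyticOnNhd hopen)
    (convex_halfSpace_im_gt 0).isPreconnected ((le_max_right _ _).trans_lt hz₀) ?_ hz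
  filter_upwards [(isOpen_lt continuous_const Complex.continuous_im).mem_nhds hz₀] with w hw
  have hw : max η₀ 0 < w.im := hw
  exact large w ((le_max_right _ _).trans_lt hw) ((le_max_left _ _).trans hw.le) lam hlam
end
end
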